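/- arXiv:1801.00884 — 7 statements merged into one kernel-verified Lean document; each statement's English description precedes it below -/
import Mathlib

section
/- Let H be the Bethe–Salpeter matrix and suppose H·x = λ·x with x ∈ ℂ^{2n}. Then (conj(λ), (Γ₀·x)ᴴ) and (−λ, (Γ₀·Π·x)ᵀ) are left eigenpairs of H; that is, (Γ₀·x)ᴴ·H = conj(λ)·(Γ₀·x)ᴴ (equivalently Hᴴ·(Γ₀·x) = λ·(Γ₀·x)) and (Γ₀·Π·x)ᵀ·H = −λ·(Γ₀·Π·x)ᵀ (equivalently Hᵀ·(Γ₀·Π·x) = −λ·(Γ₀·Π·x)). -/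
open Matrix Complex

noncomputable section

/-- The matrix Π = [[0, I],[I, 0]]. -/
def PiMat (n : ℕ) : Matrix (Fin n ⊕ Fin n) (Fin n ⊕ Fin n) ℂ :=
  Matrix.fromBlocks 0 1 1 0

/-- The matrix Γ₀ = diag(I, −I). -/
def GammaZero (n : ℕ) : Matrix (Fin n ⊕ Fin n) (Fin n ⊕ Fin n) ℂ :=
  Matrix.fromBlocks 1 0 0 (-1)

/-- Entrywise complex conjugate of a matrix. -/
def mconj {α β : Type*} (M : Matrix α β ℂ) : Matrix α β ℂ :=
  M.map (starRingEnd ℂ)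

/-- The Bethe–Salpeter matrix H = [[A, B],[−conj B, −conj A]]. -/
def BSmat {n : ℕ} (A B : Matrix (Fin n) (Fin n) ℂ) :
    Matrix (Fin n ⊕ Fin n) (Fin n ⊕ Fin n) ℂ :=
  Matrix.fromBlocks A B (-(mconj B)) (-(mconj A))

/-- Membership in 𝔾_{2k}: Γ = diag(J, −J) with J diagonal with ±1 entries. -/
def IsGammaMat {k : ℕ} (Γ : Matrix (Fin k ⊕ Fin k) (Fin k ⊕ Fin k) ℂ) : Prop :=
  ∃ d : Fin k → ℂ, (∀ i, d i = 1 ∨ d i = -1) ∧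
    Γ = Matrix.fromBlocks (Matrix.diagonal d) 0 0 (-(Matrix.diagonal d))

/-- G is a Π^ε-matrix (ε = 1 : Π⁺, ε = −1 : Π⁻): G·Π_{2m} = ε·Π_{2n}·conj(G). -/
def IsPiMat {n m : ℕ} (ε : ℂ) (G : Matrix (Fin n ⊕ Fin n) (Fin m ⊕ Fin m) ℂ) : Prop :=
  G * PiMat m = ε • (PiMat n * mconj G)

/-- R is Π^ε-upper triangular. -/
def IsPiUpperTri {n m : ℕ} (ε : ℂ) (R : Matrix (Fin n ⊕ Fin n) (Fin m ⊕ Fin m) ℂ) : Prop :=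
  ∃ R₁ R₂ : Matrix (Fin n) (Fin m) ℂ,
    R = Matrix.fromBlocks R₁ R₂ (ε • mconj R₂) (ε • mconj R₁) ∧
    (∀ (i : Fin n) (j : Fin m), (j : ℕ) < (i : ℕ) → R₁ i j = 0) ∧
    (∀ (i : Fin n) (j : Fin m), (j : ℕ) ≤ (i : ℕ) → R₂ i j = 0)

/-- The i-th Π⁻-leading principal minor of a 2m×2m matrix. -/
def piLeadingMinor {m : ℕ} (M : Matrix (Fin m ⊕ Fin m) (Fin m ⊕ Fin m) ℂ)
    (i : ℕ) (h : i ≤ m) : ℂ :=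
  (Matrix.fromBlocks
    ((M.toBlocks₁₁).submatrix (Fin.castLE h) (Fin.castLE h))
    ((M.toBlocks₁₂).submatrix (Fin.castLE h) (Fin.castLE h))
    ((M.toBlocks₂₁).submatrix (Fin.castLE h) (Fin.castLE h))
    ((M.toBlocks₂₂).submatrix (Fin.castLE h) (Fin.castLE h))).det

/-- If H·x = λ·x then (conj(λ), (Γ₀x)ᴴ) and (−λ, (Γ₀Πx)ᵀ) are left
eigenpairs of H. -/
theorem stmt3 (n : ℕ) (hn : 0 < n) (A B : Matrix (Fin n) (Fin n) ℂ)
    (hA : Aᴴ = A) (hB : Bᵀ = B)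
    (l : ℂ) (x : (Fin n ⊕ Fin n) → ℂ)
    (heig : (BSmat A B).mulVec x = l • x) :
    (Matrix.vecMul (star ((GammaZero n).mulVec x)) (BSmat A B) =
        (starRingEnd ℂ l) • star ((GammaZero n).mulVec x)) ∧
    ((BSmat A B)ᴴ.mulVec ((GammaZero n).mulVec x) = l • (GammaZero n).mulVec x) ∧
    (Matrix.vecMul ((GammaZero n * PiMat n).mulVec x) (BSmat A B) =
        (-l) • ((GammaZero n * PiMat n).mulVec x)) ∧
    ((BSmat A B)ᵀ.mulVec ((GammaZero n * PiMat n).mulVec x) =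
        (-l) • ((GammaZero n * PiMat n).mulVec x)) := by
  have cA : mconj A = Aᵀ := by
    conv_lhs => rw [← hA]
    ext i j
    simp [mconj]
  have hBe : ∀ i j, B i j = B j i := fun i j => congrFun (congrFun hB j) i
  have hAe : ∀ i j, star (A i j) = A j i := fun i j => congrFun (congrFun hA j) i
  have h1 : (BSmat A B)ᴴ * GammaZero n = GammaZero n * BSmat A B := by
    have e1 : (mconj B)ᴴ = B := by
      ext i j
      simp [mconj, hBe j i]
    have e2 : Bᴴ = mconj B := by
      ext i j
      simp [mconj, hBe j i]
    have e3 : (Aᵀ)ᴴ = Aᵀ := by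
      ext i j
      simpa using hAe i j
    simp [BSmat, GammaZero, fromBlocks_conjTranspose, fromBlocks_multiply, cA, e1, e2, e3, hA]
  have h2 : (BSmat A B)ᵀ * (GammaZero n * PiMat n) =
      -((GammaZero n * PiMat n) * BSmat A B) := by
    have e1 : (mconj B)ᵀ = mconj B := by
      ext i j
      simp [mconj, hBe j i]
    simp [BSmat, GammaZero, PiMat, fromBlocks_transpose, fromBlocks_multiply, fromBlocks_neg,
      cA, e1, hB]
  have r1 : (BSmat A B)ᴴ.mulVec ((GammaZero n).mulVec x) = l • (GammaZero n).mulVec x := by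
    rw [mulVec_mulVec, h1, ← mulVec_mulVec, heig, mulVec_smul]
  have r2 : (BSmat A B)ᵀ.mulVec ((GammaZero n * PiMat n).mulVec x) =
      (-l) • ((GammaZero n * PiMat n).mulVec x) := by
    rw [mulVec_mulVec, h2, neg_mulVec, ← mulVec_mulVec, heig, mulVec_smul, neg_smul]
  refine ⟨?_, r1, ?_, r2⟩
  · have h := congrArg star r1
    rw [star_mulVec, conjTranspose_conjTranspose, star_smul] at h
    exact h
  · rw [← mulVec_transpose]
    exact r2

end
end

section
/- Let n ≥ m be positive integers, let G ∈ ℂ^{2n×2m} be a Π⁺-matrix (or a Π⁻-matrix) of full column rank, and let Γ ∈ 𝔾_{2n}. Then G has a ΓQR factorization with respect to Γ if and only if no Π⁻-leading principal minor of GᴴΓG (which is a 2m×2m Π⁻-matrix) vanishes. -/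
open Matrix Complex

noncomputable section

/-- A ΓQR factorization of a Π^ε-matrix G with respect to Γ: G = Q·R where Q is
Γ-unitary (a Π⁺-matrix with QᴴΓQ ∈ 𝔾_{2n}) and R is Π^ε-upper triangular. -/
def IsGammaQR {n m : ℕ} (ε : ℂ) (Γ : Matrix (Fin n ⊕ Fin n) (Fin n ⊕ Fin n) ℂ)
    (G : Matrix (Fin n ⊕ Fin n) (Fin m ⊕ Fin m) ℂ)
    (Q : Matrix (Fin n ⊕ Fin n) (Fin n ⊕ Fin n) ℂ)
    (R : Matrix (Fin n ⊕ Fin n) (Fin m ⊕ Fin m) ℂ) : Prop :=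
  G = Q * R ∧ IsPiMat 1 Q ∧ IsGammaMat (Qᴴ * Γ * Q) ∧ IsPiUpperTri ε R

/-- An abstract space with an indefinite Hermitian form and a compatible antilinear involution. -/
structure HS (E : Type) [AddCommGroup E] [Module ℂ E] where
  h : E →ₗ⋆[ℂ] E →ₗ[ℂ] ℂ
  s : E →ₗ⋆[ℂ] E
  ss : ∀ x, s (s x) = x
  hs : ∀ x y, h (s x) (s y) = -star (h x y)
  hsymm : ∀ x y, star (h x y) = h y x
  nd : ∀ x, (∀ y, h x y = 0) → x = 0

namespace HS

variable {E : Type} [AddCommGroup E] [Module ℂ E] (S : HS E)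

def comb (g : ℕ → E) (a b : ℕ → ℂ) (k : ℕ) : E :=
  ∑ j ∈ Finset.range k, (a j • g j + b j • S.s (g j))

def ND (g : ℕ → E) (k : ℕ) : Prop :=
  (∀ x, ∃ a b, ∀ i < k, S.h (g i) (x - S.comb g a b k) = 0 ∧
    S.h (S.s (g i)) (x - S.comb g a b k) = 0) ∧
  (∀ a b, (∀ i < k, S.h (g i) (S.comb g a b k) = 0 ∧ S.h (S.s (g i)) (S.comb g a b k) = 0) →
    ∀ i < k, a i = 0 ∧ b i = 0)

lemma h_comb (g : ℕ → E) (a b : ℕ → ℂ) (k : ℕ) (u : E) :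
    S.h u (S.comb g a b k) =
      ∑ j ∈ Finset.range k, (a j * S.h u (g j) + b j * S.h u (S.s (g j))) := by
  simp [comb, map_sum]

lemma h_comb_zero (g : ℕ → E) (a b : ℕ → ℂ) (k : ℕ) (u : E)
    (hu : ∀ j < k, S.h u (g j) = 0 ∧ S.h u (S.s (g j)) = 0) :
    S.h u (S.comb g a b k) = 0 := by
  rw [h_comb]
  refine Finset.sum_eq_zero fun j hj => ?_
  rw [(hu j (Finset.mem_range.1 hj)).1, (hu j (Finset.mem_range.1 hj)).2]; simp

lemma s_comb (g : ℕ → E) (a b : ℕ → ℂ) (k : ℕ) :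
    S.s (S.comb g a b k) = S.comb g (fun j => star (b j)) (fun j => star (a j)) k := by
  simp [comb, map_sum, S.ss, add_comm]

lemma zsymm {x y : E} (hxy : S.h x y = 0) : S.h y x = 0 := by
  rw [← S.hsymm, hxy, star_zero]

lemma h_s_right (x y : E) : S.h x (S.s y) = -star (S.h (S.s x) y) := by
  conv_lhs => rw [← S.ss x]
  rw [S.hs]

lemma h_self_s (x : E) : S.h x (S.s x) = 0 := by
  have h1 := S.h_s_right x x
  rw [S.hsymm] at h1
  linear_combination h1 / 2

lemma h_s_self (x : E) : S.h (S.s x) x = 0 := S.zsymm (S.h_self_s x)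

lemma step (g : ℕ → E) (k : ℕ) (h0 : S.ND g k) (h1 : S.ND g (k + 1)) :
    ∃ (q : E) (d : ℂ), (d = 1 ∨ d = -1) ∧
      (∀ j < k, S.h (g j) q = 0 ∧ S.h (S.s (g j)) q = 0) ∧
      S.h (S.s (g k)) q = 0 ∧ S.h q q = d ∧
      (∀ x, (∀ j ≤ k, S.h x (g j) = 0 ∧ S.h x (S.s (g j)) = 0) →
        S.h x q = 0 ∧ S.h x (S.s q) = 0) := by
  obtain ⟨a, b, hab⟩ := h0.1 (g k)
  set v := g k - S.comb g a b k with hv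
  have hg : g k = v + S.comb g a b k := by rw [hv]; abel
  have hc : ∀ a b, S.h (S.comb g a b k) v = 0 := fun a b => by
    apply S.zsymm
    exact S.h_comb_zero g a b k v fun j hj => ⟨S.zsymm (hab j hj).1, S.zsymm (hab j hj).2⟩
  have hsg : S.h (S.s (g k)) v = 0 := by
    rw [hg, map_add, s_comb, map_add, LinearMap.add_apply, hc, h_s_self, add_zero]
  have hgv : S.h (g k) v = S.h v v := by
    conv_lhs => rw [hg]
    rw [map_add, LinearMap.add_apply, hc, add_zero]
  have hne : S.h v v ≠ 0 := by
    intro hz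
    have hvc : v = S.comb g (fun j => if j = k then 1 else -a j)
        (fun j => if j = k then 0 else -b j) (k + 1) := by
      rw [comb, Finset.sum_range_succ, hv, comb, sub_eq_neg_add, ← Finset.sum_neg_distrib]
      simp only [if_true, one_smul, zero_smul, add_zero]
      congr 1
      refine Finset.sum_congr rfl fun j hj => ?_
      have : j ≠ k := (Finset.mem_range.1 hj).ne
      simp [this]; abel
    have := h1.2 _ _ (fun i hi => by
      rw [← hvc]
      rcases Nat.lt_succ_iff_lt_or_eq.1 hi with h | h
      · exact hab i h
      · subst h; exact ⟨hgv.trans hz, hsg⟩) k (Nat.lt_succ_self k)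
    simp at this
  have hreal : ((S.h v v).re : ℂ) = S.h v v := Complex.conj_eq_iff_re.1 (S.hsymm v v)
  set r := (S.h v v).re with hr
  have hr0 : r ≠ 0 := fun h => hne (by rw [← hreal, h]; simp)
  set t : ℝ := (Real.sqrt |r|)⁻¹ with ht
  have htt : t * t * |r| = 1 := by
    have := abs_pos.2 hr0
    rw [ht, ← mul_inv, Real.mul_self_sqrt this.le]
    field_simp
  refine ⟨(t : ℂ) • v, (t * t * r : ℝ), ?_, ?_, ?_, ?_, ?_⟩
  · rcases abs_cases r with h | h
    · left; rw [← h.1, htt]; simp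
    · right
      rw [h.1] at htt
      have : t * t * r = -1 := by linarith
      rw [this]; simp
  · intro j hj
    simp [(hab j hj).1, (hab j hj).2]
  · simp [hsg]
  · rw [map_smul, LinearMap.map_smulₛₗ, LinearMap.smul_apply, ← hreal]
    simp; ring
  · intro x hx
    have e1 := S.h_comb_zero g a b k x fun j hj => hx j hj.le
    have e2 := S.h_comb_zero g (fun j => star (b j)) (fun j => star (a j)) k x
      fun j hj => hx j hj.le
    have := hx k le_rfl
    rw [hv]
    simp only [map_smul, LinearMap.map_smulₛₗ, map_sub, s_comb, e1, e2, this.1, this.2]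
    simp

lemma exists_ext [FiniteDimensional ℂ E] (g : ℕ → E) (k : ℕ) (h0 : S.ND g k)
    (hk : 2 * k < Module.finrank ℂ E) :
    ∃ w, (∀ j < k, S.h (g j) w = 0 ∧ S.h (S.s (g j)) w = 0) ∧ S.h w w ≠ 0 := by
  by_contra! hcon
  let L : E →ₗ[ℂ] (Fin k → ℂ) × (Fin k → ℂ) :=
    (LinearMap.pi fun j : Fin k => S.h (g j)).prod (LinearMap.pi fun j : Fin k => S.h (S.s (g j)))
  have hL : LinearMap.ker L ≠ ⊥ := by
    apply LinearMap.ker_ne_bot_of_finrank_lt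
    simp; omega
  obtain ⟨u, hu, hu0⟩ := Submodule.exists_mem_ne_zero_of_ne_bot hL
  have hu' : ∀ j < k, S.h (g j) u = 0 ∧ S.h (S.s (g j)) u = 0 := by
    intro j hj
    have := LinearMap.mem_ker.1 hu
    exact ⟨congrFun (congrArg Prod.fst this) ⟨j, hj⟩, congrFun (congrArg Prod.snd this) ⟨j, hj⟩⟩
  apply hu0
  apply S.nd
  intro x
  obtain ⟨a, b, hab⟩ := h0.1 x
  set v := x - S.comb g a b k with hv
  have hx : x = v + S.comb g a b k := by rw [hv]; abel
  rw [hx, map_add, S.h_comb_zero g a b k u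
    fun j hj => ⟨S.zsymm (hu' j hj).1, S.zsymm (hu' j hj).2⟩, add_zero]
  have p0 := hcon u hu'
  have p1 := hcon v hab
  have p2 := hcon (u + v) fun j hj => by
    simp [(hu' j hj).1, (hu' j hj).2, (hab j hj).1, (hab j hj).2]
  have p3 := hcon (u + Complex.I • v) fun j hj => by
    simp [(hu' j hj).1, (hu' j hj).2, (hab j hj).1, (hab j hj).2]
  simp [p0, p1] at p2 p3
  have hI := Complex.I_mul_I
  linear_combination (1/2 : ℂ) * p2 - (Complex.I / 2) * p3 + (S.h u v - S.h v u) * hI / 2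

lemma ND_congr {g g' : ℕ → E} {k : ℕ} (hg : ∀ j < k, g' j = g j) (h0 : S.ND g k) : S.ND g' k := by
  have hc : ∀ a b, S.comb g' a b k = S.comb g a b k := fun a b => by
    refine Finset.sum_congr rfl fun j hj => ?_
    rw [hg j (Finset.mem_range.1 hj)]
  constructor
  · intro x
    obtain ⟨a, b, hab⟩ := h0.1 x
    refine ⟨a, b, fun i hi => ?_⟩
    rw [hc, hg i hi]; exact hab i hi
  · intro a b hab
    refine h0.2 a b fun i hi => ?_
    have := hab i hi
    rwa [hc, hg i hi] at this

lemma ND_succ (g : ℕ → E) (k : ℕ) (h0 : S.ND g k)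
    (hw : ∀ j < k, S.h (g j) (g k) = 0 ∧ S.h (S.s (g j)) (g k) = 0)
    (hne : S.h (g k) (g k) ≠ 0) : S.ND g (k + 1) := by
  have hcs : ∀ a b, S.comb g a b (k + 1) =
      S.comb g a b k + (a k • g k + b k • S.s (g k)) := fun a b => by
    rw [comb, Finset.sum_range_succ, comb]
  have hws : ∀ j < k, S.h (g j) (S.s (g k)) = 0 ∧ S.h (S.s (g j)) (S.s (g k)) = 0 := by
    intro j hj
    rw [S.h_s_right, S.hs, (hw j hj).1, (hw j hj).2]; simp
  have z1 : ∀ a b, S.h (g k) (S.comb g a b k) = 0 := fun a b =>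
    S.h_comb_zero g a b k _ fun j hj => ⟨S.zsymm (hw j hj).1, S.zsymm (hw j hj).2⟩
  have z2 : ∀ a b, S.h (S.s (g k)) (S.comb g a b k) = 0 := fun a b =>
    S.h_comb_zero g a b k _ fun j hj => ⟨S.zsymm (hws j hj).1, S.zsymm (hws j hj).2⟩
  have hne' : S.h (S.s (g k)) (S.s (g k)) ≠ 0 := by
    rw [S.hs, S.hsymm]; exact neg_ne_zero.2 hne
  constructor
  · intro x
    obtain ⟨a, b, hab⟩ := h0.1 x
    refine ⟨fun j => if j < k then a j else S.h (g k) x / S.h (g k) (g k),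
      fun j => if j < k then b j else S.h (S.s (g k)) x / S.h (S.s (g k)) (S.s (g k)), ?_⟩
    intro i hi
    have hc : ∀ α β : ℂ, S.comb g (fun j => if j < k then a j else α)
        (fun j => if j < k then b j else β) k = S.comb g a b k := fun α β => by
      refine Finset.sum_congr rfl fun j hj => ?_
      simp [Finset.mem_range.1 hj]
    rw [hcs, hc]
    simp only [lt_irrefl, if_false, ← sub_sub]
    rcases Nat.lt_succ_iff_lt_or_eq.1 hi with h | h
    · have e := hab i h
      generalize x - S.comb g a b k = y at e ⊢
      simp [e.1, e.2, (hw i h).1, (hw i h).2, (hws i h).1, (hws i h).2]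
    · subst h
      simp [z1, z2, h_self_s, h_s_self, hne, hne']
  · intro a b hab
    have hk := hab k (Nat.lt_succ_self k)
    rw [hcs] at hk
    simp [z1, z2, h_self_s, h_s_self, hne, hne'] at hk
    have h2 := h0.2 a b fun i hi => by
      have := hab i (hi.trans (Nat.lt_succ_self k))
      rw [hcs, hk.1, hk.2] at this
      simpa using this
    intro i hi
    rcases Nat.lt_succ_iff_lt_or_eq.1 hi with h | h
    · exact h2 i h
    · subst h; exact hk

lemma extend [FiniteDimensional ℂ E] (g : ℕ → E) (m : ℕ) (h0 : ∀ k ≤ m, S.ND g k) (p : ℕ)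
    (hp : 2 * (m + p) ≤ Module.finrank ℂ E) :
    ∃ g' : ℕ → E, (∀ j < m, g' j = g j) ∧ ∀ k ≤ m + p, S.ND g' k := by
  induction p with
  | zero => exact ⟨g, fun _ _ => rfl, h0⟩
  | succ p ih =>
    obtain ⟨g', hg, hnd⟩ := ih (by omega)
    obtain ⟨w, hw, hne⟩ := S.exists_ext g' (m + p) (hnd _ le_rfl) (by omega)
    have hu : ∀ j < m + p, Function.update g' (m + p) w j = g' j := fun j hj =>
      Function.update_of_ne hj.ne _ _
    refine ⟨Function.update g' (m + p) w, fun j hj => ?_, fun k hk => ?_⟩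
    · rw [hu j (by omega), hg j hj]
    · rcases Nat.lt_or_ge k (m + p + 1) with h | h
      · exact S.ND_congr (fun j hj => hu j (by omega)) (hnd k (by omega))
      · obtain rfl : k = m + p + 1 := by omega
        apply S.ND_succ
        · exact S.ND_congr hu (hnd _ le_rfl)
        · intro j hj
          rw [hu j hj]; simpa using hw j hj
        · simpa using hne

/-- The full orthonormal family. -/
lemma full [FiniteDimensional ℂ E] (g : ℕ → E) (m n : ℕ) (hmn : m ≤ n)
    (h0 : ∀ k ≤ m, S.ND g k) (hn : Module.finrank ℂ E = 2 * n) :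
    ∃ (q : Fin n → E) (d : Fin n → ℂ), (∀ i, d i = 1 ∨ d i = -1) ∧
      (∀ i j, S.h (q i) (q j) = if i = j then d i else 0) ∧
      (∀ i j, S.h (q i) (S.s (q j)) = 0) ∧
      (∀ (i : Fin n) (j : ℕ), j < m → j < i → S.h (q i) (g j) = 0) ∧
      (∀ (i : Fin n) (j : ℕ), j < m → j ≤ i → S.h (q i) (S.s (g j)) = 0) := by
  obtain ⟨p, rfl⟩ := Nat.exists_eq_add_of_le hmn
  obtain ⟨g', hg, hnd⟩ := S.extend g m h0 p hn.ge
  have := fun i : Fin (m + p) => S.step g' i (hnd i i.2.le) (hnd (i + 1) i.2)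
  choose q d hd hq1 hq2 hq3 hq4 using this
  have key : ∀ i j : Fin (m + p), j < i → S.h (q i) (q j) = 0 ∧ S.h (q i) (S.s (q j)) = 0 := by
    intro i j hij
    refine hq4 j (q i) fun l hl => ?_
    have : l < i := lt_of_le_of_lt hl hij
    exact ⟨S.zsymm (hq1 i l this).1, S.zsymm (hq1 i l this).2⟩
  refine ⟨q, d, hd, ?_, ?_, ?_, ?_⟩
  · intro i j
    split_ifs with h
    · subst h; exact hq3 i
    · rcases lt_or_gt_of_ne h with h | h
      · exact S.zsymm (key j i h).1
      · exact (key i j h).1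
  · intro i j
    rcases lt_trichotomy i j with h | h | h
    · rw [S.h_s_right, S.hsymm, (key j i h).2, neg_zero]
    · subst h; exact S.h_self_s _
    · exact (key i j h).2
  · intro i j hj hji
    rw [← hg j hj]; exact S.zsymm (hq1 i j hji).1
  · intro i j hj hji
    rw [← hg j hj]
    rcases hji.lt_or_eq with h | h
    · exact S.zsymm (hq1 i j h).2
    · subst h; exact S.zsymm (hq2 i)

end HS

/-- The concrete indefinite Hermitian form. -/
def hForm {n : ℕ} (d : Fin n → ℂ) (x y : Fin n ⊕ Fin n → ℂ) : ℂ :=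
  ∑ i, d i * (star (x (Sum.inl i)) * y (Sum.inl i) - star (x (Sum.inr i)) * y (Sum.inr i))

lemma gamma_gram_apply {n : ℕ} {α β : Type} (d : Fin n → ℂ) (A : Matrix (Fin n ⊕ Fin n) α ℂ)
    (B : Matrix (Fin n ⊕ Fin n) β ℂ) (s : α) (t : β) :
    (Aᴴ * Matrix.fromBlocks (Matrix.diagonal d) 0 0 (-(Matrix.diagonal d)) * B) s t =
      hForm d (fun u => A u s) (fun u => B u t) := by
  rw [Matrix.mul_assoc, Matrix.mul_apply]
  simp only [Fintype.sum_sum_type, Matrix.mul_apply, Matrix.fromBlocks_apply₁₁,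
    Matrix.fromBlocks_apply₁₂, Matrix.fromBlocks_apply₂₁, Matrix.fromBlocks_apply₂₂, hForm,
    ← Finset.sum_add_distrib]
  refine Finset.sum_congr rfl fun i _ => ?_
  simp [Matrix.diagonal_apply, Finset.sum_ite_eq, ite_mul, Finset.sum_add_distrib, -Finset.sum_neg_distrib, neg_ite]
  ring

/-- The concrete space. -/
def conc {n : ℕ} (d : Fin n → ℂ) (hd : ∀ i, d i = 1 ∨ d i = -1) : HS (Fin n ⊕ Fin n → ℂ) where
  h := LinearMap.mk₂'ₛₗ _ _ (hForm d)
    (fun x y z => by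
      simp only [hForm, ← Finset.sum_add_distrib]
      refine Finset.sum_congr rfl fun i _ => ?_
      simp; ring)
    (fun c x y => by
      simp only [hForm, smul_eq_mul, Finset.mul_sum]
      refine Finset.sum_congr rfl fun i _ => ?_
      simp; ring)
    (fun x y z => by
      simp only [hForm, ← Finset.sum_add_distrib]
      refine Finset.sum_congr rfl fun i _ => ?_
      simp; ring)
    (fun c x y => by
      simp only [hForm, smul_eq_mul, Finset.mul_sum]
      refine Finset.sum_congr rfl fun i _ => ?_
      simp; ring)
  s := { toFun := fun x u => star (x u.swap)
         map_add' := fun x y => by ext u; simp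
         map_smul' := fun c x => by ext u; simp }
  ss := fun x => by ext u; simp
  hs := fun x y => by
    simp only [LinearMap.mk₂'ₛₗ_apply, hForm, star_sum, ← Finset.sum_neg_distrib]
    refine Finset.sum_congr rfl fun i _ => ?_
    rcases hd i with h | h <;> simp [h] 
  hsymm := fun x y => by
    simp only [LinearMap.mk₂'ₛₗ_apply, hForm, star_sum]
    refine Finset.sum_congr rfl fun i _ => ?_
    rcases hd i with h | h <;> simp [h] <;> ring
  nd := fun x hx => by
    have hd0 : ∀ i, d i ≠ 0 := fun i => by rcases hd i with h | h <;> simp [h]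
    ext u
    have h1 := hx (Pi.single u 1)
    simp only [LinearMap.mk₂'ₛₗ_apply, hForm] at h1
    rcases u with u | u
    · simpa [Pi.single_apply, hd0] using h1
    · simpa [Pi.single_apply, hd0] using h1

lemma conc_h {n : ℕ} (d : Fin n → ℂ) (hd) (x y : Fin n ⊕ Fin n → ℂ) :
    (conc d hd).h x y = hForm d x y := rfl

lemma conc_s {n : ℕ} (d : Fin n → ℂ) (hd) (x : Fin n ⊕ Fin n → ℂ) (u) :
    (conc d hd).s x u = star (x u.swap) := rfl

lemma PiMat_apply {n : ℕ} (u v : Fin n ⊕ Fin n) : PiMat n u v = if u = v.swap then 1 else 0 := by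
  rcases u with u | u <;> rcases v with v | v <;> simp [PiMat, Matrix.one_apply]

lemma isPiMat_iff {n m : ℕ} (ε : ℂ) (G : Matrix (Fin n ⊕ Fin n) (Fin m ⊕ Fin m) ℂ) :
    IsPiMat ε G ↔ ∀ u t, G u t.swap = ε * star (G u.swap t) := by
  have e1 : ∀ u t, (G * PiMat m) u t = G u t.swap := fun u t => by
    simp [Matrix.mul_apply, PiMat_apply]
  have e2 : ∀ u t, (PiMat n * mconj G) u t = star (G u.swap t) := fun u t => by
    have : ∀ v : Fin n ⊕ Fin n, (u = v.swap) ↔ (u.swap = v) := fun v => by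
      constructor <;> (intro h; subst h; simp)
    simp [Matrix.mul_apply, PiMat_apply, mconj, this]
  rw [IsPiMat, ← Matrix.ext_iff]
  simp only [e1, Matrix.smul_apply, e2, smul_eq_mul]

lemma minor_eq {m : ℕ} (M : Matrix (Fin m ⊕ Fin m) (Fin m ⊕ Fin m) ℂ) (i : ℕ) (h : i ≤ m) :
    piLeadingMinor M i h = (M.submatrix (Sum.map (Fin.castLE h) (Fin.castLE h))
      (Sum.map (Fin.castLE h) (Fin.castLE h))).det := by
  unfold piLeadingMinor
  congr 1
  ext u v
  rcases u with u | u <;> rcases v with v | v <;> rfl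

lemma gamma_sq {n : ℕ} (d : Fin n → ℂ) (hd : ∀ i, d i = 1 ∨ d i = -1) :
    (Matrix.fromBlocks (Matrix.diagonal d) 0 0 (-(Matrix.diagonal d)) *
      Matrix.fromBlocks (Matrix.diagonal d) 0 0 (-(Matrix.diagonal d)) :
        Matrix (Fin n ⊕ Fin n) (Fin n ⊕ Fin n) ℂ) = 1 := by
  have : (Matrix.diagonal d * Matrix.diagonal d : Matrix (Fin n) (Fin n) ℂ) = 1 := by
    rw [Matrix.diagonal_mul_diagonal, ← Matrix.diagonal_one]
    congr 1; ext i; rcases hd i with h | h <;> simp [h]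
  rw [Matrix.fromBlocks_multiply]
  simp only [Matrix.mul_zero, Matrix.zero_mul, add_zero, zero_add, neg_mul_neg, this,
    Matrix.fromBlocks_one]

lemma forward {n m : ℕ} (hnm : m ≤ n) (ε : ℂ)
    (G : Matrix (Fin n ⊕ Fin n) (Fin m ⊕ Fin m) ℂ) (hrank : G.rank = 2 * m)
    (Γ Q : Matrix (Fin n ⊕ Fin n) (Fin n ⊕ Fin n) ℂ) (R : Matrix (Fin n ⊕ Fin n) (Fin m ⊕ Fin m) ℂ)
    (hQR : IsGammaQR ε Γ G Q R) (i : ℕ) (h : i ≤ m) : piLeadingMinor (Gᴴ * Γ * G) i h ≠ 0 := by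
  obtain ⟨hG, -, ⟨d, hd, hQ⟩, R₁, R₂, hR, hR1, hR2⟩ := hQR
  rw [minor_eq]
  set f : Fin i ⊕ Fin i → Fin m ⊕ Fin m := Sum.map (Fin.castLE h) (Fin.castLE h) with hf
  set e : Fin i ⊕ Fin i → Fin n ⊕ Fin n :=
    Sum.map (Fin.castLE (h.trans hnm)) (Fin.castLE (h.trans hnm)) with he
  have hfi : Function.Injective f :=
    Sum.map_injective.2 ⟨Fin.castLE_injective _, Fin.castLE_injective _⟩
  have hei : Function.Injective e :=
    Sum.map_injective.2 ⟨Fin.castLE_injective _, Fin.castLE_injective _⟩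
  set P : Matrix (Fin n ⊕ Fin n) (Fin i ⊕ Fin i) ℂ := (1 : Matrix _ _ ℂ).submatrix id e with hP
  set Ri := R.submatrix e f with hRi
  have hzero : ∀ u, (∀ v, u ≠ e v) → ∀ t, R u (f t) = 0 := by
    intro u hu t
    have hge : ∀ w : Fin n, (u = Sum.inl w ∨ u = Sum.inr w) → i ≤ w := by
      intro w hw
      by_contra! hlt
      rcases hw with hw | hw
      · exact hu (Sum.inl ⟨w, hlt⟩) (by rw [hw]; rfl)
      · exact hu (Sum.inr ⟨w, hlt⟩) (by rw [hw]; rfl)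
    rw [hR]
    rcases u with u | u
    · have := hge u (Or.inl rfl)
      rcases t with t | t
      · exact hR1 _ _ (lt_of_lt_of_le t.2 this)
      · exact hR2 _ _ (lt_of_lt_of_le t.2 this).le
    · have := hge u (Or.inr rfl)
      rcases t with t | t
      · simp [hf, mconj, hR2 u (Fin.castLE h t) (lt_of_lt_of_le t.2 this).le]
      · simp [hf, mconj, hR1 u (Fin.castLE h t) (lt_of_lt_of_le t.2 this)]
  have hRP : R.submatrix id f = P * Ri := by
    ext u t
    simp only [Matrix.mul_apply, hP, hRi, Matrix.submatrix_apply, id, Matrix.one_apply, ite_mul,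
      one_mul, zero_mul]
    by_cases hu : ∃ v, u = e v
    · obtain ⟨v, rfl⟩ := hu
      simp [hei.eq_iff]
    · push Not at hu
      rw [hzero u hu]
      simp [hu]
  set D : Matrix (Fin n ⊕ Fin n) (Fin n ⊕ Fin n) ℂ :=
    Matrix.fromBlocks (Matrix.diagonal d) 0 0 (-(Matrix.diagonal d)) with hD
  have hPDP : Pᴴ * D * P = Matrix.fromBlocks (Matrix.diagonal (d ∘ Fin.castLE (h.trans hnm))) 0 0
      (-(Matrix.diagonal (d ∘ Fin.castLE (h.trans hnm)))) := by
    have : Pᴴ * D * P = D.submatrix e e := by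
      ext s t
      simp [hP, Matrix.mul_apply, Matrix.one_apply]
    rw [this]
    ext s t
    rcases s with s | s <;> rcases t with t | t <;>
      simp [hD, he, Matrix.diagonal_apply, (Fin.castLE_injective _).eq_iff]
  have hM : (Gᴴ * Γ * G).submatrix f f = Riᴴ * (Pᴴ * D * P) * Ri := by
    have h1 : Gᴴ * Γ * G = Rᴴ * D * R := by
      rw [← hQ, hG, Matrix.conjTranspose_mul]; simp only [Matrix.mul_assoc]
    have h2 : (Rᴴ * D * R).submatrix f f = (R.submatrix id f)ᴴ * D * (R.submatrix id f) := by
      ext s t; simp [Matrix.mul_apply]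
    rw [h1, h2, hRP, Matrix.conjTranspose_mul]; simp only [Matrix.mul_assoc]
  have hRdet : Ri.det ≠ 0 := by
    intro h0
    obtain ⟨c, hc, hc0⟩ := Matrix.exists_mulVec_eq_zero_iff.2 h0
    have hG0 : (G.submatrix id f) *ᵥ c = 0 := by
      have : G.submatrix id f = Q * (R.submatrix id f) := by
        rw [hG]; ext; simp [Matrix.mul_apply]
      rw [this, hRP, ← Matrix.mulVec_mulVec, ← Matrix.mulVec_mulVec, hc0]
      simp
    have hli : LinearIndependent ℂ G.col := by
      rw [linearIndependent_iff_card_eq_finrank_span, Set.finrank,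
        ← Matrix.rank_eq_finrank_span_cols, hrank]
      simp; ring
    have hli' : LinearIndependent ℂ (G.submatrix id f).col := hli.comp f hfi
    have := Matrix.mulVec_injective_iff.2 hli'
    exact hc (this (by rw [hG0, Matrix.mulVec_zero]))
  have hDdet : (Pᴴ * D * P).det ≠ 0 := by
    intro h0
    have := gamma_sq (d ∘ Fin.castLE (h.trans hnm)) (fun i => hd _)
    rw [← hPDP] at this
    have := congrArg Matrix.det this
    rw [Matrix.det_mul, h0] at this
    simp at this
  rw [hM, Matrix.det_mul, Matrix.det_mul, Matrix.det_conjTranspose]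
  exact mul_ne_zero (mul_ne_zero (star_ne_zero.2 hRdet) hDdet) hRdet

lemma ND_of_minor {n m : ℕ} (ε : ℂ) (hε : ε = 1 ∨ ε = -1)
    (G : Matrix (Fin n ⊕ Fin n) (Fin m ⊕ Fin m) ℂ)
    (d : Fin n → ℂ) (hd : ∀ i, d i = 1 ∨ d i = -1) (g : ℕ → Fin n ⊕ Fin n → ℂ)
    (hg : ∀ j : Fin m, (fun u => G u (Sum.inl j)) = g j)
    (hgs : ∀ j : Fin m, (fun u => G u (Sum.inr j)) = ε • (conc d hd).s (g j))
    (k : ℕ) (hk : k ≤ m)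
    (hdet : piLeadingMinor (Gᴴ * Matrix.fromBlocks (Matrix.diagonal d) 0 0 (-(Matrix.diagonal d)) * G)
      k hk ≠ 0) : (conc d hd).ND g k := by
  set S := conc d hd with hS
  have hεε : ε * ε = 1 := by rcases hε with h | h <;> simp [h]
  have hε0 : ε ≠ 0 := left_ne_zero_of_mul_eq_one hεε
  have hεs : star ε = ε := by rcases hε with h | h <;> simp [h]
  rw [minor_eq] at hdet
  set N := (Gᴴ * Matrix.fromBlocks (Matrix.diagonal d) 0 0 (-(Matrix.diagonal d)) * G).submatrix
    (Sum.map (Fin.castLE hk) (Fin.castLE hk)) (Sum.map (Fin.castLE hk) (Fin.castLE hk)) with hN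
  let w : Fin k ⊕ Fin k → Fin n ⊕ Fin n → ℂ :=
    Sum.elim (fun j => g j) (fun j => ε • S.s (g j))
  have hNw : ∀ s t, N s t = S.h (w s) (w t) := by
    intro s t
    have hcol : ∀ s, (fun u => G u (Sum.map (Fin.castLE hk) (Fin.castLE hk) s)) = w s := by
      intro s
      rcases s with s | s
      · exact hg (Fin.castLE hk s)
      · exact hgs (Fin.castLE hk s)
    rw [hN, Matrix.submatrix_apply, gamma_gram_apply, hcol, hcol, hS, conc_h]
  have hcomb : ∀ a b, S.comb g a b k =
      ∑ t, (Sum.elim (fun j : Fin k => a j) (fun j : Fin k => ε * b j) : Fin k ⊕ Fin k → ℂ) t • w t := by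
    intro a b
    rw [Fintype.sum_sum_type, HS.comb, Finset.sum_add_distrib, Finset.sum_range, Finset.sum_range]
    simp only [Sum.elim_inl, Sum.elim_inr, w, smul_smul]
    congr 1
    refine Finset.sum_congr rfl fun j _ => ?_
    rw [mul_right_comm, hεε, one_mul]
  have hNc : ∀ (c : Fin k ⊕ Fin k → ℂ) s, (N *ᵥ c) s = S.h (w s) (∑ t, c t • w t) := by
    intro c s
    simp only [Matrix.mulVec, dotProduct, hNw, map_sum, map_smul, smul_eq_mul]
    exact Finset.sum_congr rfl fun j _ => mul_comm _ _
  have hwiff : ∀ x, (∀ i < k, S.h (g i) x = 0 ∧ S.h (S.s (g i)) x = 0) ↔ ∀ s, S.h (w s) x = 0 := by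
    intro x
    constructor
    · intro hx s
      rcases s with s | s
      · exact (hx s s.2).1
      · simp [w, (hx s s.2).2]
    · intro hx i hi
      have h1 := hx (Sum.inl ⟨i, hi⟩)
      have h2 := hx (Sum.inr ⟨i, hi⟩)
      simp only [w, Sum.elim_inl, Sum.elim_inr, LinearMap.map_smulₛₗ, LinearMap.smul_apply,
        smul_eq_mul, mul_eq_zero] at h1 h2
      refine ⟨h1, h2.resolve_left ?_⟩
      simpa using hε0
  have hunit : IsUnit N.det := isUnit_iff_ne_zero.2 hdet
  constructor
  · intro x
    set c := N⁻¹ *ᵥ (fun s => S.h (w s) x) with hc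
    have hNc' : N *ᵥ c = fun s => S.h (w s) x := by
      rw [hc, Matrix.mulVec_mulVec, Matrix.mul_nonsing_inv _ hunit, Matrix.one_mulVec]
    refine ⟨fun j => if h : j < k then c (Sum.inl ⟨j, h⟩) else 0,
      fun j => if h : j < k then ε * c (Sum.inr ⟨j, h⟩) else 0, ?_⟩
    rw [hwiff]
    intro s
    rw [hcomb, map_sub, sub_eq_zero, ← hNc]
    have : (Sum.elim (fun j : Fin k => if h : (j : ℕ) < k then c (Sum.inl ⟨j, h⟩) else 0)
        (fun j : Fin k => ε * if h : (j : ℕ) < k then ε * c (Sum.inr ⟨j, h⟩) else 0)) = c := by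
      ext t
      rcases t with t | t
      · simp
      · simp [← mul_assoc, hεε]
    rw [this, hNc']
  · intro a b hab
    rw [hwiff] at hab
    have h0 : N *ᵥ (Sum.elim (fun j : Fin k => a j) (fun j : Fin k => ε * b j)) = 0 := by
      ext s
      rw [hNc, ← hcomb]; exact hab s
    have hz := Matrix.eq_zero_of_mulVec_eq_zero hdet h0
    intro i hi
    have h1 := congrFun hz (Sum.inl ⟨i, hi⟩)
    have h2 := congrFun hz (Sum.inr ⟨i, hi⟩)
    simp [hε0] at h1 h2
    exact ⟨h1, h2⟩

lemma backward {n m : ℕ} (hnm : m ≤ n) (ε : ℂ) (hε : ε = 1 ∨ ε = -1)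
    (G : Matrix (Fin n ⊕ Fin n) (Fin m ⊕ Fin m) ℂ) (hPi : IsPiMat ε G)
    (Γ : Matrix (Fin n ⊕ Fin n) (Fin n ⊕ Fin n) ℂ) (hΓ : IsGammaMat Γ)
    (hmin : ∀ (i : ℕ) (h : i ≤ m), 1 ≤ i → piLeadingMinor (Gᴴ * Γ * G) i h ≠ 0) :
    ∃ Q R, IsGammaQR ε Γ G Q R := by
  obtain ⟨δ, hδ, rfl⟩ := hΓ
  rw [isPiMat_iff] at hPi
  have hεs : star ε = ε := by rcases hε with h | h <;> simp [h]
  have hεε : ε * ε = 1 := by rcases hε with h | h <;> simp [h]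
  let g : ℕ → Fin n ⊕ Fin n → ℂ := fun j => if h : j < m then fun u => G u (Sum.inl ⟨j, h⟩) else 0
  have hg : ∀ j : Fin m, (fun u => G u (Sum.inl j)) = g j := fun j => by simp [g]
  have hgs : ∀ j : Fin m, (fun u => G u (Sum.inr j)) = ε • (conc δ hδ).s (g j) := fun j => by
    ext u
    rw [← hg, Pi.smul_apply, conc_s, smul_eq_mul]
    exact hPi u (Sum.inl j)
  have hND : ∀ k ≤ m, (conc δ hδ).ND g k := by
    intro k hk
    rcases Nat.eq_zero_or_pos k with rfl | hpos
    · exact ⟨fun x => ⟨0, 0, fun i hi => absurd hi (Nat.not_lt_zero i)⟩,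
        fun a b _ i hi => absurd hi (Nat.not_lt_zero i)⟩
    · exact ND_of_minor ε hε G δ hδ g hg hgs k hk (hmin k hk hpos)
  obtain ⟨q, d, hd, hqq, hqs, hqg, hqsg⟩ :=
    (conc δ hδ).full g m n hnm hND (by simp; ring)
  set S := conc δ hδ with hS
  set Γ : Matrix (Fin n ⊕ Fin n) (Fin n ⊕ Fin n) ℂ :=
    Matrix.fromBlocks (Matrix.diagonal δ) 0 0 (-(Matrix.diagonal δ)) with hΓ
  set D : Matrix (Fin n ⊕ Fin n) (Fin n ⊕ Fin n) ℂ :=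
    Matrix.fromBlocks (Matrix.diagonal d) 0 0 (-(Matrix.diagonal d)) with hD
  let Q : Matrix (Fin n ⊕ Fin n) (Fin n ⊕ Fin n) ℂ :=
    fun u t => Sum.elim (fun j => q j) (fun j => S.s (q j)) t u
  have hQl : ∀ j, (fun u => Q u (Sum.inl j)) = q j := fun j => rfl
  have hQr : ∀ j, (fun u => Q u (Sum.inr j)) = S.s (q j) := fun j => rfl
  have hQPi : IsPiMat 1 Q := by
    rw [isPiMat_iff]
    intro u t
    rw [one_mul]
    rcases t with t | t
    · rfl
    · change q t u = star (S.s (q t) u.swap)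
      rw [hS, conc_s]; simp
  have hds : ∀ i, star (d i) = d i := fun i => by rcases hd i with h | h <;> simp [h]
  have hQD : Qᴴ * Γ * Q = D := by
    ext s t
    rw [hΓ, gamma_gram_apply, ← conc_h δ hδ, ← hS]
    rcases s with s | s <;> rcases t with t | t
    · rw [hQl, hQl, hqq]; simp [hD, Matrix.diagonal_apply]
    · rw [hQl, hQr, hqs]; simp [hD]
    · rw [hQl, hQr, S.zsymm (hqs t s)]; simp [hD]
    · rw [hQr, hQr, S.hs, hqq]
      by_cases hst : s = t
      · simp [hD, hst]; simpa using hds t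
      · simp [hD, Matrix.diagonal_apply, hst]
  have hinv : Q * (D * Qᴴ * Γ) = 1 := by
    rw [mul_eq_one_comm]
    have : D * Qᴴ * Γ * Q = D * (Qᴴ * Γ * Q) := by simp only [Matrix.mul_assoc]
    rw [this, hQD, hD, gamma_sq d hd]
  refine ⟨Q, D * (Qᴴ * Γ * G), ?_, hQPi, ⟨d, hd, hQD⟩,
    Matrix.of fun i j => d i * S.h (q i) (g j),
    Matrix.of fun i j => d i * S.h (q i) (ε • S.s (g j)), ?_, ?_, ?_⟩
  · have : Q * (D * (Qᴴ * Γ * G)) = Q * (D * Qᴴ * Γ) * G := by simp only [Matrix.mul_assoc]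
    rw [this, hinv, Matrix.one_mul]
  · have hX : ∀ s t, (Qᴴ * Γ * G) s t = S.h (fun u => Q u s) (fun u => G u t) := by
      intro s t
      rw [hΓ, gamma_gram_apply, hS, conc_h]
    have hDX : ∀ X : Matrix (Fin n ⊕ Fin n) (Fin m ⊕ Fin m) ℂ, ∀ s t,
        (D * X) s t = Sum.elim d (fun i => - d i) s * X s t := by
      intro X s t
      have : D = Matrix.diagonal (Sum.elim d (fun i => - d i)) := by
        rw [hD]
        ext s t
        rcases s with s | s <;> rcases t with t | t <;> simp [Matrix.diagonal_apply]
      rw [this, Matrix.diagonal_mul]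
    ext s t
    rw [hDX, hX]
    rcases s with s | s <;> rcases t with t | t
    · rw [hQl, hg]; rfl
    · rw [hQl, hgs]; rfl
    · rw [hQr, hg]
      simp only [Sum.elim_inr, Matrix.fromBlocks_apply₂₁, Matrix.smul_apply, mconj,
        Matrix.map_apply, Matrix.of_apply, starRingEnd_apply, star_mul', hds, map_smul,
        smul_eq_mul, hεs, S.h_s_right, star_neg, star_star]
      linear_combination (d s * S.h (S.s (q s)) (g t)) * hεε
    · rw [hQr, hgs]
      simp only [Sum.elim_inr, Matrix.fromBlocks_apply₂₂, Matrix.smul_apply, mconj,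
        Matrix.map_apply, Matrix.of_apply, starRingEnd_apply, star_mul', hds, map_smul,
        smul_eq_mul, hεs, S.hs]
      ring
  · intro i j hij
    simp [hqg i j j.2 hij]
  · intro i j hij
    simp [hqsg i j j.2 hij]

/-- G has a ΓQR factorization with respect to Γ iff no Π⁻-leading
principal minor of GᴴΓG vanishes. -/
theorem stmt6 (n m : ℕ) (hm : 0 < m) (hnm : m ≤ n) (ε : ℂ) (hε : ε = 1 ∨ ε = -1)
    (G : Matrix (Fin n ⊕ Fin n) (Fin m ⊕ Fin m) ℂ)
    (hPi : IsPiMat ε G) (hrank : G.rank = 2 * m)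
    (Γ : Matrix (Fin n ⊕ Fin n) (Fin n ⊕ Fin n) ℂ) (hΓ : IsGammaMat Γ) :
    (∃ Q R, IsGammaQR ε Γ G Q R) ↔
      (∀ (i : ℕ) (h : i ≤ m), 1 ≤ i → piLeadingMinor (Gᴴ * Γ * G) i h ≠ 0) := by
  constructor
  · rintro ⟨Q, R, hQR⟩ i h _
    exact forward hnm ε G hrank Γ Q R hQR i h
  · exact backward hnm ε hε G hPi Γ hΓ

end
end

section
/- Let H be the Bethe–Salpeter matrix and assume that all 2n eigenvalues of H are simple (the characteristic polynomial of H has 2n distinct roots). Then there exist an invertible matrix X ∈ ℂ^{2n×2n} satisfying X·Π = Π·conj(X) (a Π⁺-matrix), and a matrix Λ = [[Λ₁, Λ₂],[−conj(Λ₂), −conj(Λ₁)]] ∈ ℂ^{2n×2n} with Λ₁, Λ₂ ∈ ℂ^{n×n} both diagonal (a Π⁻-diagonal matrix), such that H·X = X·Λ. -/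
open Matrix Complex

noncomputable section

/-- The antilinear involution v ↦ Π conj v. -/
def Jv {n : ℕ} (v : Fin n ⊕ Fin n → ℂ) : Fin n ⊕ Fin n → ℂ :=
  fun k => starRingEnd ℂ (v k.swap)

lemma Jv_Jv {n : ℕ} (v : Fin n ⊕ Fin n → ℂ) : Jv (Jv v) = v := by
  funext k; simp [Jv]

lemma Jv_add {n : ℕ} (v w : Fin n ⊕ Fin n → ℂ) : Jv (v + w) = Jv v + Jv w := by
  funext k; simp [Jv]

lemma Jv_smul {n : ℕ} (c : ℂ) (v : Fin n ⊕ Fin n → ℂ) :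
    Jv (c • v) = (starRingEnd ℂ c) • Jv v := by
  funext k; simp [Jv]

lemma Jv_ne {n : ℕ} {v : Fin n ⊕ Fin n → ℂ} (h : v ≠ 0) : Jv v ≠ 0 := by
  intro h0
  apply h
  rw [← Jv_Jv v, h0]
  funext k; simp [Jv]

lemma BS_Jv {n : ℕ} (A B : Matrix (Fin n) (Fin n) ℂ) (v : Fin n ⊕ Fin n → ℂ) :
    BSmat A B *ᵥ Jv v = - Jv (BSmat A B *ᵥ v) := by
  funext k
  rcases k with k | k <;>
    simp [BSmat, Jv, mconj, Matrix.mulVec, dotProduct, Fintype.sum_sum_type, add_comm]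

/-- λ ↦ −conj λ. -/
def sg (z : ℂ) : ℂ := -(starRingEnd ℂ z)

lemma sg_sg (z : ℂ) : sg (sg z) = z := by simp [sg]

lemma BS_Jv_eig {n : ℕ} (A B : Matrix (Fin n) (Fin n) ℂ) (v : Fin n ⊕ Fin n → ℂ) (l : ℂ)
    (h : BSmat A B *ᵥ v = l • v) : BSmat A B *ᵥ Jv v = sg l • Jv v := by
  rw [BS_Jv, h, Jv_smul, sg, neg_smul]

lemma fixed_eig {n : ℕ} (A B : Matrix (Fin n) (Fin n) ℂ) (v : Fin n ⊕ Fin n → ℂ) (l : ℂ)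
    (h : BSmat A B *ᵥ v = l • v) (hv : v ≠ 0) (hl : sg l = l) :
    ∃ w, w ≠ 0 ∧ BSmat A B *ᵥ w = l • w ∧ Jv w = w := by
  by_cases h0 : v + Jv v = 0
  · refine ⟨I • v, ?_, ?_, ?_⟩
    · simpa using hv
    · rw [Matrix.mulVec_smul, h, smul_comm]
    · rw [Jv_smul, ← neg_eq_of_add_eq_zero_right h0]; simp
  · refine ⟨v + Jv v, h0, ?_, ?_⟩
    · rw [Matrix.mulVec_add, h, BS_Jv_eig A B v l h, hl, smul_add]
    · rw [Jv_add, Jv_Jv, add_comm]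

lemma pairing (n : ℕ) : ∀ (S : Finset ℂ), S.card = 2 * n → (∀ z ∈ S, sg z ∈ S) →
    ∃ p q : Fin n → ℂ, Function.Injective (Sum.elim p q) ∧ (∀ i, p i ∈ S) ∧ (∀ i, q i ∈ S) ∧
      ∀ i, q i = sg (p i) ∨ (sg (p i) = p i ∧ sg (q i) = q i) := by
  induction n with
  | zero =>
    intro S _ _
    exact ⟨Fin.elim0, Fin.elim0, fun a => by rcases a with a | a <;> exact a.elim0,
      fun i => i.elim0, fun i => i.elim0, fun i => i.elim0⟩
  | succ n ih =>
    intro S hS hs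
    have key : ∃ a ∈ S, ∃ b ∈ S, a ≠ b ∧ (b = sg a ∨ (sg a = a ∧ sg b = b)) := by
      by_cases h : ∃ a ∈ S, sg a ≠ a
      · obtain ⟨a, ha, hne⟩ := h
        exact ⟨a, ha, sg a, hs a ha, hne.symm, Or.inl rfl⟩
      · push Not at h
        obtain ⟨a, ha, b, hb, hab⟩ := Finset.one_lt_card.1 (by omega : 1 < S.card)
        exact ⟨a, ha, b, hb, hab, Or.inr ⟨h a ha, h b hb⟩⟩
    obtain ⟨a, ha, b, hb, hab, hc⟩ := key
    have hb' : b ∈ S.erase a := Finset.mem_erase.2 ⟨hab.symm, hb⟩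
    obtain ⟨p, q, hinj, hp, hq, hpq⟩ := ih ((S.erase a).erase b)
      (by rw [Finset.card_erase_of_mem hb', Finset.card_erase_of_mem ha]; omega)
      (by
        intro z hz
        simp only [Finset.mem_erase] at hz ⊢
        obtain ⟨h1, h2, h3⟩ := hz
        refine ⟨?_, ?_, hs z h3⟩
        · intro h
          have := sg_sg z
          rcases hc with hc | ⟨hc1, hc2⟩
          · apply h2; rw [← this, h, hc, sg_sg]
          · apply h1; rw [← this, h, hc2]
        · intro h
          have := sg_sg z
          rcases hc with hc | ⟨hc1, hc2⟩
          · apply h1; rw [← this, h, hc]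
          · apply h2; rw [← this, h, hc1])
    simp only [Finset.mem_erase] at hp hq
    have hi := Sum.elim_injective.1 hinj
    refine ⟨Fin.cons a p, Fin.cons b q, ?_, ?_, ?_, ?_⟩
    · rw [Sum.elim_injective]
      refine ⟨?_, ?_, ?_⟩
      · rw [Fin.cons_injective_iff]
        exact ⟨by rintro ⟨i, h⟩; exact (hp i).2.1 h, hi.1⟩
      · rw [Fin.cons_injective_iff]
        exact ⟨by rintro ⟨i, h⟩; exact (hq i).1 h, hi.2.1⟩
      · intro i j
        refine Fin.cases ?_ (fun i => ?_) i <;> refine Fin.cases ?_ (fun j => ?_) j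
        · simpa using hab
        · simpa using (hq j).2.1.symm
        · simpa using (hp i).1
        · simpa using hi.2.2 i j
    · intro i; refine Fin.cases ?_ (fun i => ?_) i
      · simpa using ha
      · simpa using (hp i).2.2
    · intro i; refine Fin.cases ?_ (fun i => ?_) i
      · simpa using hb
      · simpa using (hq i).2.2
    · intro i; refine Fin.cases ?_ (fun i => ?_) i
      · simpa using hc
      · simpa using hpq i

lemma pair_data {n : ℕ} (A B : Matrix (Fin n) (Fin n) ℂ) (a b : ℂ)
    (ha : ∃ v, v ≠ 0 ∧ BSmat A B *ᵥ v = a • v) (hb : ∃ v, v ≠ 0 ∧ BSmat A B *ᵥ v = b • v)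
    (hc : b = sg a ∨ (sg a = a ∧ sg b = b)) :
    ∃ (x u w : Fin n ⊕ Fin n → ℂ) (α β c1 c2 d1 d2 : ℂ), u ≠ 0 ∧ w ≠ 0 ∧
      BSmat A B *ᵥ u = a • u ∧ BSmat A B *ᵥ w = b • w ∧
      u = c1 • x + c2 • Jv x ∧ w = d1 • x + d2 • Jv x ∧
      BSmat A B *ᵥ x = α • x - (starRingEnd ℂ β) • Jv x := by
  obtain ⟨v, hv, hev⟩ := ha
  rcases hc with hc | ⟨h1, h2⟩
  · refine ⟨v, v, Jv v, a, 0, 1, 0, 0, 1, hv, Jv_ne hv, hev, ?_, ?_, ?_, ?_⟩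
    · rw [BS_Jv_eig A B v a hev, hc]
    · simp
    · simp
    · simpa using hev
  · obtain ⟨v', hv', hev'⟩ := hb
    obtain ⟨u, hu, heu, hJu⟩ := fixed_eig A B v a hev hv h1
    obtain ⟨w, hw, hew, hJw⟩ := fixed_eig A B v' b hev' hv' h2
    have hJ : Jv (u + I • w) = u - I • w := by
      rw [Jv_add, Jv_smul, hJu, hJw]; simp [sub_eq_add_neg]
    refine ⟨u + I • w, u, w, (a + b) / 2, (a - b) / 2, 1 / 2, 1 / 2, - I / 2, I / 2,
      hu, hw, heu, hew, ?_, ?_, ?_⟩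
    · rw [hJ]; funext k; simp; ring
    · rw [hJ]; funext k; simp; linear_combination (w k) * I_sq
    · rw [hJ, Matrix.mulVec_add, Matrix.mulVec_smul, heu, hew]
      have e1 : starRingEnd ℂ a = -a := by rw [← neg_eq_iff_eq_neg]; exact h1
      have e2 : starRingEnd ℂ b = -b := by rw [← neg_eq_iff_eq_neg]; exact h2
      have e3 : starRingEnd ℂ 2 = 2 := Complex.conj_ofNat 2
      funext k; simp [e1, e2, e3]; ring

/-- if all eigenvalues of H are simple, H has an eigendecomposition
H·X = X·Λ with X an invertible Π⁺-matrix and Λ Π⁻-diagonal. -/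
theorem stmt9 (n : ℕ) (hn : 0 < n) (A B : Matrix (Fin n) (Fin n) ℂ)
    (hA : Aᴴ = A) (hB : Bᵀ = B)
    (hsimple : ((BSmat A B).charpoly.roots.toFinset.card = 2 * n)) :
    ∃ (X : Matrix (Fin n ⊕ Fin n) (Fin n ⊕ Fin n) ℂ)
      (Λ₁ Λ₂ : Matrix (Fin n) (Fin n) ℂ),
      IsUnit X.det ∧
      X * PiMat n = PiMat n * mconj X ∧
      Λ₁.IsDiag ∧ Λ₂.IsDiag ∧
      BSmat A B * X =
        X * Matrix.fromBlocks Λ₁ Λ₂ (-(mconj Λ₂)) (-(mconj Λ₁)) := by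
  classical
  have hroot : ∀ z, z ∈ (BSmat A B).charpoly.roots.toFinset ↔
      ∃ v, v ≠ 0 ∧ BSmat A B *ᵥ v = z • v := by
    intro z
    rw [Multiset.mem_toFinset, Polynomial.mem_roots (Matrix.charpoly_monic _).ne_zero,
      ← Matrix.charpoly_toLin', ← Module.End.hasEigenvalue_iff_isRoot_charpoly]
    constructor
    · intro h
      obtain ⟨v, hv⟩ := h.exists_hasEigenvector
      exact ⟨v, hv.2, by simpa using hv.apply_eq_smul⟩
    · rintro ⟨v, hv, h⟩
      exact Module.End.hasEigenvalue_of_hasEigenvector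
        ⟨Module.End.mem_eigenspace_iff.2 (by simpa using h), hv⟩
  obtain ⟨p, q, hinj, hp, hq, hpq⟩ := pairing n _ hsimple (by
    intro z hz
    rw [hroot] at hz ⊢
    obtain ⟨v, hv, h⟩ := hz
    exact ⟨Jv v, Jv_ne hv, BS_Jv_eig A B v z h⟩)
  choose x u w α β c1 c2 d1 d2 hu hw heu hew hux hwx hx using fun i =>
    pair_data A B (p i) (q i) ((hroot _).1 (hp i)) ((hroot _).1 (hq i)) (hpq i)
  let V : Matrix (Fin n ⊕ Fin n) (Fin n ⊕ Fin n) ℂ :=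
    Matrix.of fun k j => Sum.elim u w j k
  let X : Matrix (Fin n ⊕ Fin n) (Fin n ⊕ Fin n) ℂ :=
    Matrix.of fun k j => Sum.elim x (fun i => Jv (x i)) j k
  let C : Matrix (Fin n ⊕ Fin n) (Fin n ⊕ Fin n) ℂ :=
    Matrix.fromBlocks (diagonal c1) (diagonal d1) (diagonal c2) (diagonal d2)
  have hVX : V = X * C := by
    ext k j
    rcases j with j | j
    · simp [V, X, C, Matrix.mul_apply, Fintype.sum_sum_type, diagonal_apply]
      rw [congrFun (hux j) k]; simp; ring
    · simp [V, X, C, Matrix.mul_apply, Fintype.sum_sum_type, diagonal_apply]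
      rw [congrFun (hwx j) k]; simp; ring
  have hli : LinearIndependent ℂ (Sum.elim u w) := by
    refine Module.End.eigenvectors_linearIndependent' (Matrix.toLin' (BSmat A B))
      (Sum.elim p q) hinj (Sum.elim u w) ?_
    rintro (i | i)
    · exact ⟨Module.End.mem_eigenspace_iff.2 (by simpa using heu i), hu i⟩
    · exact ⟨Module.End.mem_eigenspace_iff.2 (by simpa using hew i), hw i⟩
  have hV : IsUnit V := by
    rw [← Matrix.linearIndependent_cols_iff_isUnit]
    exact hli
  refine ⟨X, diagonal α, diagonal β, ?_, ?_, isDiag_diagonal _, isDiag_diagonal _, ?_⟩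
  · have := (Matrix.isUnit_iff_isUnit_det V).1 hV
    rw [hVX, Matrix.det_mul] at this
    exact isUnit_of_mul_isUnit_left this
  · ext k j
    rcases j with j | j <;> rcases k with k | k <;>
    simp [X, PiMat, mconj, Matrix.mul_apply, Fintype.sum_sum_type, Jv, Matrix.one_apply]
  · ext k j
    rcases j with j | j
    · have h := congrFun (hx j) k
      have e : (BSmat A B * X) k (Sum.inl j) = (BSmat A B *ᵥ x j) k := rfl
      rw [e, h]
      simp [X, mconj, Matrix.mul_apply, Fintype.sum_sum_type, diagonal_apply, apply_ite]
      ring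
    · have h := congrFun (BS_Jv A B (x j)) k
      have e : (BSmat A B * X) k (Sum.inr j) = (BSmat A B *ᵥ Jv (x j)) k := rfl
      rw [e, h, hx j]
      simp [X, mconj, Matrix.mul_apply, Fintype.sum_sum_type, diagonal_apply, apply_ite, Jv]
      ring


end
end

section
/- Let H be the Bethe–Salpeter matrix, let ω ∈ ℝ, ω ≠ 0, and suppose that iω and −iω are both simple eigenvalues of H (each of algebraic multiplicity one). Then there exists u ∈ ℂ^{2n}, u ≠ 0, such that H·u = −ω·(Π·conj(u)) and H·(Π·conj(u)) = ω·u; moreover u and Π·conj(u) are linearly independent, so that the 2n×2 matrix G = [u, Π·conj(u)] has full column rank, satisfies G·Π₂ = Π·conj(G) (a Π⁺-matrix, where Π₂ = [[0,1],[1,0]]), and H·G = G·[[0, ω],[−ω, 0]]. -/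
open Matrix Complex

noncomputable section

theorem bs_K_K {n : ℕ} (v : Fin n ⊕ Fin n → ℂ) :
    (PiMat n).mulVec (star ((PiMat n).mulVec (star v))) = v := by
  funext i
  rcases i with i | i <;> simp [PiMat, Matrix.fromBlocks_mulVec, Function.comp_def]

theorem bs_K_add {n : ℕ} (v w : Fin n ⊕ Fin n → ℂ) :
    (PiMat n).mulVec (star (v + w)) =
      (PiMat n).mulVec (star v) + (PiMat n).mulVec (star w) := by
  rw [star_add, Matrix.mulVec_add]

theorem bs_K_smul {n : ℕ} (c : ℂ) (v : Fin n ⊕ Fin n → ℂ) :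
    (PiMat n).mulVec (star (c • v)) = (star c) • (PiMat n).mulVec (star v) := by
  rw [star_smul, Matrix.mulVec_smul]

theorem bs_H_K {n : ℕ} (A B : Matrix (Fin n) (Fin n) ℂ) (v : Fin n ⊕ Fin n → ℂ) :
    (BSmat A B).mulVec ((PiMat n).mulVec (star v)) =
      -(PiMat n).mulVec (star ((BSmat A B).mulVec v)) := by
  funext i
  rcases i with i | i <;>
  simp [PiMat, BSmat, mconj, Matrix.fromBlocks_mulVec, Function.comp_def, Matrix.mulVec,
    dotProduct, Finset.sum_neg_distrib, add_comm, Matrix.one_apply]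

theorem bs_eig {n : ℕ} (A B : Matrix (Fin n) (Fin n) ℂ) (c : ℂ) (hc : star c = -c)
    (h : (BSmat A B).charpoly.rootMultiplicity c = 1) :
    ∃ v : Fin n ⊕ Fin n → ℂ, v ≠ 0 ∧ (BSmat A B).mulVec v = c • v ∧
      (PiMat n).mulVec (star v) = v := by
  have hr : (BSmat A B).charpoly.IsRoot c :=
    (Polynomial.rootMultiplicity_pos (Matrix.charpoly_monic _).ne_zero).1 (by omega)
  rw [Polynomial.IsRoot, Matrix.eval_charpoly] at hr
  obtain ⟨v, hv0, hv⟩ := Matrix.exists_mulVec_eq_zero_iff.2 hr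
  have hv' : (BSmat A B).mulVec v = c • v := by
    rw [Matrix.sub_mulVec, sub_eq_zero] at hv
    rw [← hv]
    funext i
    simp [Matrix.scalar_apply, Matrix.mulVec_diagonal]
  have hK : (BSmat A B).mulVec ((PiMat n).mulVec (star v)) =
      c • (PiMat n).mulVec (star v) := by
    rw [bs_H_K, hv', bs_K_smul, hc, neg_smul, neg_neg]
  by_cases h0 : v + (PiMat n).mulVec (star v) = 0
  · have h1 : (PiMat n).mulVec (star v) = -v := (neg_eq_of_add_eq_zero_right h0).symm
    refine ⟨Complex.I • v, smul_ne_zero Complex.I_ne_zero hv0, ?_, ?_⟩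
    · rw [Matrix.mulVec_smul, hv', smul_comm]
    · rw [bs_K_smul, h1]; simp
  · refine ⟨_, h0, ?_, ?_⟩
    · rw [Matrix.mulVec_add, hv', hK, smul_add]
    · rw [bs_K_add, bs_K_K, add_comm]

/-- if iω and −iω (ω ∈ ℝ, ω ≠ 0) are simple eigenvalues of H, then there
is u ≠ 0 with H·u = −ω·Π·conj(u), H·(Π·conj(u)) = ω·u, u and Π·conj(u) linearly
independent, and G = [u, Π·conj(u)] is a full-column-rank Π⁺-matrix with
H·G = G·[[0, ω],[−ω, 0]]. -/
theorem stmt10 (n : ℕ) (hn : 0 < n) (A B : Matrix (Fin n) (Fin n) ℂ)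
    (hA : Aᴴ = A) (hB : Bᵀ = B)
    (ω : ℝ) (hω : ω ≠ 0)
    (hsimple₁ : (BSmat A B).charpoly.rootMultiplicity (Complex.I * ω) = 1)
    (hsimple₂ : (BSmat A B).charpoly.rootMultiplicity (-(Complex.I * ω)) = 1) :
    ∃ u : (Fin n ⊕ Fin n) → ℂ, u ≠ 0 ∧
      (BSmat A B).mulVec u = (-(ω : ℂ)) • (PiMat n).mulVec (star u) ∧
      (BSmat A B).mulVec ((PiMat n).mulVec (star u)) = (ω : ℂ) • u ∧
      LinearIndependent ℂ ![u, (PiMat n).mulVec (star u)] ∧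
      (let G : Matrix (Fin n ⊕ Fin n) (Fin 1 ⊕ Fin 1) ℂ :=
        Matrix.of fun i j =>
          Sum.elim (fun _ => u i) (fun _ => (PiMat n).mulVec (star u) i) j
       G.rank = 2 ∧
       G * PiMat 1 = PiMat n * mconj G ∧
       BSmat A B * G =
         G * Matrix.fromBlocks 0 ((ω : ℂ) • (1 : Matrix (Fin 1) (Fin 1) ℂ))
               ((-(ω : ℂ)) • (1 : Matrix (Fin 1) (Fin 1) ℂ)) 0) := by
  obtain ⟨v, hv0, hv, hKv⟩ := bs_eig A B _ (by simp) hsimple₁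
  obtain ⟨w, hw0, hw, hKw⟩ := bs_eig A B _ (by simp) hsimple₂
  have hωc : (ω : ℂ) ≠ 0 := by exact_mod_cast hω
  obtain ⟨u, hu⟩ : ∃ u, u = (1 + Complex.I) • v + (1 - Complex.I) • w := ⟨_, rfl⟩
  have hKu : (PiMat n).mulVec (star u) = (1 - Complex.I) • v + (1 + Complex.I) • w := by
    rw [hu, bs_K_add, bs_K_smul, bs_K_smul, hKv, hKw]
    simp [sub_eq_add_neg]
  have hHu : (BSmat A B).mulVec u = (-(ω : ℂ)) • (PiMat n).mulVec (star u) := by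
    rw [hKu, hu, Matrix.mulVec_add, Matrix.mulVec_smul, Matrix.mulVec_smul, hv, hw]
    funext i
    simp only [Pi.add_apply, Pi.smul_apply, smul_eq_mul]
    linear_combination (ω * v i + ω * w i) * Complex.I_mul_I
  have hHK : (BSmat A B).mulVec ((PiMat n).mulVec (star u)) = (ω : ℂ) • u := by
    rw [bs_H_K, hHu, bs_K_smul, bs_K_K]
    simp
  have hli : LinearIndependent ℂ ![u, (PiMat n).mulVec (star u)] := by
    rw [LinearIndependent.pair_iff]
    intro s t hst
    rw [hKu, hu] at hst
    obtain ⟨a, ha⟩ : ∃ a, a = s * (1 + Complex.I) + t * (1 - Complex.I) := ⟨_, rfl⟩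
    obtain ⟨b, hb⟩ : ∃ b, b = s * (1 - Complex.I) + t * (1 + Complex.I) := ⟨_, rfl⟩
    have h1 : a • v + b • w = 0 := by
      rw [← hst, ha, hb]
      module
    have h2 := congrArg (BSmat A B).mulVec h1
    rw [Matrix.mulVec_add, Matrix.mulVec_smul, Matrix.mulVec_smul, hv, hw,
      Matrix.mulVec_zero] at h2
    have hd : (2 * (Complex.I * ω)) ≠ 0 := by simp [hω]
    have h3 : (2 * (Complex.I * ω)) • (a • v) = 0 := by
      have : (2 * (Complex.I * ω)) • (a • v) = (Complex.I * (ω : ℂ)) • (a • v + b • w) +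
          (a • (Complex.I * (ω : ℂ)) • v + b • -(Complex.I * (ω : ℂ)) • w) := by module
      rw [this, h1, h2]; simp
    have h4 : (2 * (Complex.I * ω)) • (b • w) = 0 := by
      have : (2 * (Complex.I * ω)) • (b • w) = (Complex.I * (ω : ℂ)) • (a • v + b • w) -
          (a • (Complex.I * (ω : ℂ)) • v + b • -(Complex.I * (ω : ℂ)) • w) := by module
      rw [this, h1, h2]; simp
    have ha0 : a = 0 := by simpa [hv0, hω] using h3
    have hb0 : b = 0 := by simpa [hw0, hω] using h4
    rw [ha0] at ha
    rw [hb0] at hb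
    constructor
    · linear_combination (-(1 - Complex.I) * ha - (1 + Complex.I) * hb) / 4 + (s - t) / 2 * Complex.I_mul_I
    · linear_combination (-(1 + Complex.I) * ha - (1 - Complex.I) * hb) / 4 + (t - s) / 2 * Complex.I_mul_I
  refine ⟨u, ?_, hHu, hHK, hli, ?_⟩
  · simpa using hli.ne_zero 0
  intro G
  refine ⟨?_, ?_, ?_⟩
  · rw [← Matrix.rank_transpose]
    have : LinearIndependent ℂ Gᵀ.row := by
      have := hli.comp (Sum.elim (fun _ : Fin 1 => (0 : Fin 2)) (fun _ : Fin 1 => 1)) (by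
        intro x y
        rcases x with x | x <;> rcases y with y | y <;> simp [Subsingleton.elim x y])
      convert this using 1
      funext j
      rcases j with j | j <;> rfl
    rw [this.rank_matrix]
    simp
  · ext i j
    have h1 : (PiMat n * mconj G) i j = (PiMat n).mulVec (star (fun k => G k j)) i := rfl
    rw [h1]
    rcases j with j | j
    · have : (fun k => G k (Sum.inl j)) = u := rfl
      rw [this]
      simp [PiMat, Matrix.mul_apply, G, Subsingleton.elim _ j]
    · have : (fun k => G k (Sum.inr j)) = (PiMat n).mulVec (star u) := rfl
      rw [this, bs_K_K]
      simp [PiMat, Matrix.mul_apply, G, Subsingleton.elim _ j]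
  · ext i j
    have h1 : (BSmat A B * G) i j = (BSmat A B).mulVec (fun k => G k j) i := rfl
    rw [h1]
    rcases j with j | j
    · have : (fun k => G k (Sum.inl j)) = u := rfl
      rw [this, hHu]
      simp [Matrix.mul_apply, G, Subsingleton.elim _ j, mul_comm]
    · have : (fun k => G k (Sum.inr j)) = (PiMat n).mulVec (star u) := rfl
      rw [this, hHK]
      simp [Matrix.mul_apply, G, Subsingleton.elim _ j, mul_comm]


end
end

section
/- Let H be the Bethe–Salpeter matrix, let q₁ ∈ ℂ^{2n} and k ≥ 1 with n ≥ k+1. Suppose that K_{2k+2}(H, q₁) has full column rank, that no Π⁻-leading principal minor of K_{2k+2}(H, q₁)ᴴ·Γ₀·K_{2k+2}(H, q₁) vanishes, and let K_{2k+2}(H, q₁) = Q_{2k+2}·R_{2k+2} be a skinny ΓQR factorization with respect to Γ₀; write Q_{2k+2} = [U_k, u_{k+1}, Π·conj(U_k), Π·conj(u_{k+1})] with U_k ∈ ℂ^{2n×k}, u_{k+1} ∈ ℂ^{2n}, write Q_{2k+2}ᴴ·Γ₀·Q_{2k+2} = Γ_{2k+2} = diag(D_k, δ_{k+1}, −D_k,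 −δ_{k+1}) ∈ 𝔾_{2k+2}, and let Q_{2k} = [U_k, Π·conj(U_k)], Γ_{2k} = diag(D_k, −D_k), and let R_{2k} be the submatrix of R_{2k+2} obtained by deleting its (k+1)-th and (2k+2)-th rows and columns. Then: (i) R_{2k} is nonsingular; (ii) K_{2k}(H, q₁) = Q_{2k}·R_{2k}; (iii) Q_{2k}ᴴ·Γ₀·Q_{2k} = Γ_{2k}; and (iv) Q_{2k}ᴴ·Γ₀·u_{k+1} = 0 and Q_{2k}ᴴ·Γ₀·Π·conj(u_{k+1}) = 0. -/
open Matrix Complex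

noncomputable section

/-- The k-th order Π-Krylov matrix
K_{2k}(H, q) = [q, Hq, …, H^{k−1}q, Π·conj(q), …, Π·conj(H)^{k−1}·conj(q)]. -/
def KrylovMat {n : ℕ} (H : Matrix (Fin n ⊕ Fin n) (Fin n ⊕ Fin n) ℂ)
    (q : (Fin n ⊕ Fin n) → ℂ) (k : ℕ) :
    Matrix (Fin n ⊕ Fin n) (Fin k ⊕ Fin k) ℂ :=
  Matrix.of fun i j =>
    Sum.elim (fun l : Fin k => (H ^ (l : ℕ)).mulVec q i)
      (fun l : Fin k => (PiMat n).mulVec (((mconj H) ^ (l : ℕ)).mulVec (star q)) i) j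

/-- The Π⁺-matrix [q₁, …, q_m, Π·conj(q₁), …, Π·conj(q_m)] built from the columns q. -/
def QfromCols {n m : ℕ} (q : Fin m → (Fin n ⊕ Fin n) → ℂ) :
    Matrix (Fin n ⊕ Fin n) (Fin m ⊕ Fin m) ℂ :=
  Matrix.of fun i j =>
    Sum.elim (fun l : Fin m => q l i)
      (fun l : Fin m => (PiMat n).mulVec (star (q l)) i) j

/-- The (2k+2)×2k matrix in ΓLan form with blocks T₁₁ (tridiagonal), T₂₁ (diagonal)
and scalar t: rows 1..k are [T₁₁, −conj T₂₁], row k+1 is [t·e_kᵀ, 0], rows k+2..2k+1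
are [T₂₁, −conj T₁₁] and row 2k+2 is [0, −conj(t)·e_kᵀ]. -/
def gammaLanForm (k : ℕ) (T11 T21 : Matrix (Fin k) (Fin k) ℂ) (t : ℂ) :
    Matrix (Fin (k + 1) ⊕ Fin (k + 1)) (Fin k ⊕ Fin k) ℂ :=
  Matrix.of fun i j =>
    match i with
    | Sum.inl i' =>
        if h : (i' : ℕ) < k then
          Sum.elim (fun j' => T11 ⟨i', h⟩ j')
            (fun j' => -(starRingEnd ℂ (T21 ⟨i', h⟩ j'))) j
        else
          Sum.elim (fun j' : Fin k => if (j' : ℕ) + 1 = k then t else 0)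
            (fun _ => 0) j
    | Sum.inr i' =>
        if h : (i' : ℕ) < k then
          Sum.elim (fun j' => T21 ⟨i', h⟩ j')
            (fun j' => -(starRingEnd ℂ (T11 ⟨i', h⟩ j'))) j
        else
          Sum.elim (fun _ => 0)
            (fun j' : Fin k => if (j' : ℕ) + 1 = k then -(starRingEnd ℂ t) else 0) j

/-- T₁₁ is tridiagonal. -/
def IsTridiagonal {k : ℕ} (T : Matrix (Fin k) (Fin k) ℂ) : Prop :=
  ∀ i j : Fin k, ((i : ℕ) + 1 < (j : ℕ) ∨ (j : ℕ) + 1 < (i : ℕ)) → T i j = 0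

/-- A skinny ΓQR factorization (for Π⁺-matrices) of G with respect to Γ. -/
def IsSkinnyGammaQR {n m : ℕ} (Γ : Matrix (Fin n ⊕ Fin n) (Fin n ⊕ Fin n) ℂ)
    (G Q : Matrix (Fin n ⊕ Fin n) (Fin m ⊕ Fin m) ℂ)
    (R : Matrix (Fin m ⊕ Fin m) (Fin m ⊕ Fin m) ℂ) : Prop :=
  G = Q * R ∧ IsPiMat 1 Q ∧ IsGammaMat (Qᴴ * Γ * Q) ∧ IsPiUpperTri 1 R
/-- relation between the skinny ΓQR factorizations of K_{2k+2}(H, q₁) and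
K_{2k}(H, q₁). -/
theorem stmt12 (n k : ℕ) (hk : 1 ≤ k) (hn : k + 1 ≤ n)
    (A B : Matrix (Fin n) (Fin n) ℂ) (hA : Aᴴ = A) (hB : Bᵀ = B)
    (q₁ : (Fin n ⊕ Fin n) → ℂ)
    (hrank : (KrylovMat (BSmat A B) q₁ (k + 1)).rank = 2 * (k + 1))
    (hminor : ∀ (i : ℕ) (h : i ≤ k + 1), 1 ≤ i →
      piLeadingMinor ((KrylovMat (BSmat A B) q₁ (k + 1))ᴴ * GammaZero n *
        KrylovMat (BSmat A B) q₁ (k + 1)) i h ≠ 0)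
    (Q : Matrix (Fin n ⊕ Fin n) (Fin (k + 1) ⊕ Fin (k + 1)) ℂ)
    (R : Matrix (Fin (k + 1) ⊕ Fin (k + 1)) (Fin (k + 1) ⊕ Fin (k + 1)) ℂ)
    (hQR : IsSkinnyGammaQR (GammaZero n) (KrylovMat (BSmat A B) q₁ (k + 1)) Q R)
    (δ : Fin (k + 1) → ℂ) (hδ : ∀ j, δ j = 1 ∨ δ j = -1)
    (hGam : Qᴴ * GammaZero n * Q =
      Matrix.fromBlocks (Matrix.diagonal δ) 0 0 (-(Matrix.diagonal δ))) :
    -- Q_{2k}, R_{2k} and u_{k+1} extracted from Q and R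
    (IsUnit (R.submatrix (Sum.map Fin.castSucc Fin.castSucc)
        (Sum.map Fin.castSucc Fin.castSucc)).det) ∧
    (KrylovMat (BSmat A B) q₁ k =
      Q.submatrix id (Sum.map Fin.castSucc Fin.castSucc) *
        R.submatrix (Sum.map Fin.castSucc Fin.castSucc)
          (Sum.map Fin.castSucc Fin.castSucc)) ∧
    ((Q.submatrix id (Sum.map Fin.castSucc Fin.castSucc))ᴴ * GammaZero n *
        Q.submatrix id (Sum.map Fin.castSucc Fin.castSucc) =
      Matrix.fromBlocks (Matrix.diagonal (δ ∘ Fin.castSucc)) 0 0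
        (-(Matrix.diagonal (δ ∘ Fin.castSucc)))) ∧
    ((Q.submatrix id (Sum.map Fin.castSucc Fin.castSucc))ᴴ.mulVec
        ((GammaZero n).mulVec fun i => Q i (Sum.inl (Fin.last k))) = 0) ∧
    ((Q.submatrix id (Sum.map Fin.castSucc Fin.castSucc))ᴴ.mulVec
        ((GammaZero n).mulVec
          ((PiMat n).mulVec (star fun i => Q i (Sum.inl (Fin.last k))))) = 0) := by
  obtain ⟨hK, hQ, -, R₁, R₂, hR, hR₁, hR₂⟩ := hQR
  set c : Fin k ⊕ Fin k → Fin (k + 1) ⊕ Fin (k + 1) := Sum.map Fin.castSucc Fin.castSucc with hc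
  have hKsub : KrylovMat (BSmat A B) q₁ k = (KrylovMat (BSmat A B) q₁ (k + 1)).submatrix id c := by
    ext i j
    rcases j with j | j <;> simp [KrylovMat, hc]
  have h2 : KrylovMat (BSmat A B) q₁ k = Q.submatrix id c * R.submatrix c c := by
    rw [hKsub, hK]
    ext i j
    have hz1 : R (Sum.inl (Fin.last k)) (c j) = 0 := by
      rw [hR]
      rcases j with j | j
      · simpa [hc] using hR₁ (Fin.last k) j.castSucc (by simp)
      · simpa [hc] using hR₂ (Fin.last k) j.castSucc (by simpa using j.2.le)
    have hz2 : R (Sum.inr (Fin.last k)) (c j) = 0 := by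
      rw [hR]
      rcases j with j | j
      · simp [hc, mconj, hR₂ (Fin.last k) j.castSucc (by simpa using j.2.le)]
      · simp [hc, mconj, hR₁ (Fin.last k) j.castSucc (by simp)]
    simp only [Matrix.submatrix_apply, Matrix.mul_apply, Fintype.sum_sum_type,
      Fin.sum_univ_castSucc, hz1, hz2, mul_zero, add_zero, id]
    simp [hc]
  have h3 : (Q.submatrix id c)ᴴ * GammaZero n * Q.submatrix id c =
      Matrix.fromBlocks (Matrix.diagonal (δ ∘ Fin.castSucc)) 0 0
        (-(Matrix.diagonal (δ ∘ Fin.castSucc))) := by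
    have : (Q.submatrix id c)ᴴ * GammaZero n * Q.submatrix id c =
        (Qᴴ * GammaZero n * Q).submatrix c c := by
      ext i j
      simp [Matrix.mul_apply]
    rw [this, hGam]
    ext i j
    rcases i with i | i <;> rcases j with j | j <;>
      simp [hc, Matrix.diagonal_apply]
  have hcol : ∀ i j, (Qᴴ * GammaZero n * Q) (c i) j =
      ((Q.submatrix id c)ᴴ.mulVec ((GammaZero n).mulVec fun l => Q l j)) i := by
    intro i j
    rw [Matrix.mulVec_mulVec]
    simp [Matrix.mul_apply, Matrix.mulVec, dotProduct]
  refine ⟨?_, h2, h3, ?_, ?_⟩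
  · have hm := hminor k (Nat.le_succ k) hk
    have he : piLeadingMinor ((KrylovMat (BSmat A B) q₁ (k + 1))ᴴ * GammaZero n *
        KrylovMat (BSmat A B) q₁ (k + 1)) k (Nat.le_succ k) =
        ((KrylovMat (BSmat A B) q₁ k)ᴴ * GammaZero n * KrylovMat (BSmat A B) q₁ k).det := by
      rw [hKsub]
      unfold piLeadingMinor
      congr 1
      ext i j
      rcases i with i | i <;> rcases j with j | j <;> 
        simp [hc, Matrix.mul_apply, Matrix.toBlocks₁₁, Matrix.toBlocks₁₂, Matrix.toBlocks₂₁,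
          Matrix.toBlocks₂₂] <;> rfl
    rw [he, h2] at hm
    rw [← Matrix.mul_assoc, Matrix.det_mul] at hm
    exact (right_ne_zero_of_mul hm).isUnit
  · funext i
    rw [← hcol, hGam]
    rcases i with i | i
    · simp [hc, Matrix.diagonal_apply, (Fin.castSucc_lt_last i).ne]
    · simp [hc]
  · have hu : (PiMat n).mulVec (star fun i => Q i (Sum.inl (Fin.last k))) =
        fun i => Q i (Sum.inr (Fin.last k)) := by
      funext i
      have := congrFun (congrFun hQ i) (Sum.inl (Fin.last k))
      have hl : (Q * PiMat (k + 1)) i (Sum.inl (Fin.last k)) = Q i (Sum.inr (Fin.last k)) := by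
        simp [PiMat, Matrix.mul_apply, Matrix.one_apply]
      rw [hl] at this
      rw [this]
      simp [Matrix.mul_apply, Matrix.mulVec, dotProduct, mconj]
    rw [hu]
    funext i
    rw [← hcol, hGam]
    rcases i with i | i
    · simp [hc]
    · simp [hc, Matrix.diagonal_apply, (Fin.castSucc_lt_last i).ne]

end
end

section
/- Let H be the Bethe–Salpeter matrix, let q₁ ∈ ℂ^{2n} and k ≥ 1 with n ≥ k+1. Suppose that K_{2k+2}(H, q₁) has full column rank, that no Π⁻-leading principal minor of K_{2k+2}(H, q₁)ᴴ·Γ₀·K_{2k+2}(H, q₁) vanishes, and let K_{2k+2}(H, q₁) = Q_{2k+2}·R_{2k+2} be a skinny ΓQR factorization with respect to Γ₀; write Q_{2k+2} = [U_k, u_{k+1}, Π·conj(U_k), Π·conj(u_{k+1})], Q_{2k+2}ᴴ·Γ₀·Q_{2k+2} = Γ_{2k+2} = diag(D_k, δ_{k+1}, −D_k, −δ_{k+1}) ∈ 𝔾_{2k+2}, Q_{2k} = [U_k, Π·conj(U_k)] and Γ_{2k} = diag(D_k, −D_k). Then there exist an unreduced tridiagonal matrix T₁₁ ∈ ℂ^{k×k}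 (tridiagonal with all sub- and super-diagonal entries nonzero), a diagonal matrix T₂₁ ∈ ℂ^{k×k}, and t ∈ ℂ such that, with T̃_{2k} ∈ ℂ^{(2k+2)×2k} the matrix in ΓLan form with blocks T₁₁, T₂₁, t: (i) H·Q_{2k} = Q_{2k+2}·T̃_{2k}; (ii) Q_{2k}ᴴ·Γ₀·H·Q_{2k} = Γ_{2k}·[[T₁₁, −conj(T₂₁)],[T₂₁, −conj(T₁₁)]]; and (iii) D_k·T₁₁ is Hermitian, i.e. (D_k·T₁₁)ᴴ = D_k·T₁₁. -/
open Matrix Complex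

noncomputable section

/-- The antilinear involution x ↦ Π conj x. -/
def Jmap {n : ℕ} (x : (Fin n ⊕ Fin n) → ℂ) : (Fin n ⊕ Fin n) → ℂ :=
  fun i => star (x i.swap)

lemma PiMat_mulVec {n : ℕ} (x : (Fin n ⊕ Fin n) → ℂ) :
    (PiMat n).mulVec x = fun i => x i.swap := by
  funext i
  rcases i with i | i <;> simp [PiMat, Matrix.mulVec, dotProduct, Fintype.sum_sum_type, Matrix.one_apply]

lemma Jmap_eq {n : ℕ} (x : (Fin n ⊕ Fin n) → ℂ) : (PiMat n).mulVec (star x) = Jmap x := by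
  rw [PiMat_mulVec]; rfl

lemma Jmap_add {n : ℕ} (x y : (Fin n ⊕ Fin n) → ℂ) : Jmap (x + y) = Jmap x + Jmap y := by
  funext i; simp [Jmap]

lemma Jmap_smul {n : ℕ} (c : ℂ) (x : (Fin n ⊕ Fin n) → ℂ) : Jmap (c • x) = star c • Jmap x := by
  funext i; simp [Jmap]

lemma Jmap_zero {n : ℕ} : Jmap (0 : (Fin n ⊕ Fin n) → ℂ) = 0 := by
  funext i; simp [Jmap]

lemma Jmap_Jmap {n : ℕ} (x : (Fin n ⊕ Fin n) → ℂ) : Jmap (Jmap x) = x := by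
  funext i; simp [Jmap]

lemma BS_swap {n : ℕ} (A B : Matrix (Fin n) (Fin n) ℂ) (i j : Fin n ⊕ Fin n) :
    BSmat A B i.swap j = - star (BSmat A B i j.swap) := by
  rcases i with i | i <;> rcases j with j | j <;> simp [BSmat, mconj]

lemma BS_Jmap {n : ℕ} (A B : Matrix (Fin n) (Fin n) ℂ) (x : (Fin n ⊕ Fin n) → ℂ) :
    (BSmat A B).mulVec (Jmap x) = - Jmap ((BSmat A B).mulVec x) := by
  funext i
  simp only [Matrix.mulVec, dotProduct, Pi.neg_apply, Jmap, star_sum, star_mul']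
  rw [← Finset.sum_neg_distrib, ← Equiv.sum_comp (Equiv.sumComm (Fin n) (Fin n))]
  refine Finset.sum_congr rfl fun j _ => ?_
  simp [BS_swap]

/-- Span of f i, J (f i), i < m. -/
def cspan {n : ℕ} (f : ℕ → (Fin n ⊕ Fin n) → ℂ) (m : ℕ) : Submodule ℂ ((Fin n ⊕ Fin n) → ℂ) :=
  Submodule.span ℂ {x | ∃ i < m, x = f i ∨ x = Jmap (f i)}

lemma mem_cspan {n : ℕ} (f : ℕ → (Fin n ⊕ Fin n) → ℂ) {i m : ℕ} (h : i < m) : f i ∈ cspan f m :=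
  Submodule.subset_span ⟨i, h, Or.inl rfl⟩

lemma mem_cspan_J {n : ℕ} (f : ℕ → (Fin n ⊕ Fin n) → ℂ) {i m : ℕ} (h : i < m) :
    Jmap (f i) ∈ cspan f m :=
  Submodule.subset_span ⟨i, h, Or.inr rfl⟩

lemma cspan_mono {n : ℕ} (f : ℕ → (Fin n ⊕ Fin n) → ℂ) {l m : ℕ} (h : l ≤ m) :
    cspan f l ≤ cspan f m :=
  Submodule.span_mono fun _ ⟨i, hi, hx⟩ => ⟨i, hi.trans_le h, hx⟩

lemma cspan_J {n : ℕ} (f : ℕ → (Fin n ⊕ Fin n) → ℂ) (m : ℕ) {x : (Fin n ⊕ Fin n) → ℂ}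
    (hx : x ∈ cspan f m) : Jmap x ∈ cspan f m := by
  induction hx using Submodule.span_induction with
  | mem x hx =>
    obtain ⟨i, hi, rfl | rfl⟩ := hx
    · exact mem_cspan_J f hi
    · rw [Jmap_Jmap]; exact mem_cspan f hi
  | zero => rw [Jmap_zero]; exact Submodule.zero_mem _
  | add x y _ _ hx hy => rw [Jmap_add]; exact Submodule.add_mem _ hx hy
  | smul c x _ hx => rw [Jmap_smul]; exact Submodule.smul_mem _ _ hx

lemma cspan_le {n : ℕ} (f g : ℕ → (Fin n ⊕ Fin n) → ℂ) (m l : ℕ)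
    (h : ∀ i < m, g i ∈ cspan f l) : cspan g m ≤ cspan f l := by
  refine Submodule.span_le.2 ?_
  rintro x ⟨i, hi, rfl | rfl⟩
  · exact h i hi
  · exact cspan_J f l (h i hi)

/-- triangular relation: forward inclusion -/
lemma cspan_tri_le {n : ℕ} (f g : ℕ → (Fin n ⊕ Fin n) → ℂ) (r : ℕ → ℂ) (m : ℕ)
    (h : ∀ j < m, g j - r j • f j ∈ cspan f j) : cspan g m ≤ cspan f m := by
  refine cspan_le f g m m fun i hi => ?_
  have := Submodule.add_mem _ (cspan_mono f hi.le (h i hi))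
    (Submodule.smul_mem _ (r i) (mem_cspan f hi))
  simpa using this

lemma cspan_tri_ge {n : ℕ} (f g : ℕ → (Fin n ⊕ Fin n) → ℂ) (r : ℕ → ℂ) (m : ℕ)
    (h : ∀ j < m, g j - r j • f j ∈ cspan f j) (hr : ∀ j < m, r j ≠ 0) :
    cspan f m ≤ cspan g m := by
  induction m with
  | zero => exact cspan_le g f 0 0 fun i hi => absurd hi (by omega)
  | succ m ih =>
    have ih' := ih (fun j hj => h j (by omega)) (fun j hj => hr j (by omega))
    refine cspan_le g f _ _ fun i hi => ?_
    rcases Nat.lt_succ_iff_lt_or_eq.1 hi with hi | rfl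
    · exact cspan_mono g (Nat.le_succ m) (ih' (mem_cspan f hi))
    · have h1 := cspan_mono g (Nat.le_succ i) (ih' (h i (by omega)))
      have h2 := Submodule.smul_mem _ (r i)⁻¹
        (Submodule.sub_mem _ (mem_cspan g (Nat.lt_succ_self i)) h1)
      simpa [smul_smul, inv_mul_cancel₀ (hr i (by omega))] using h2

/-- nonvanishing of the diagonal -/
lemma tri_ne_zero {n : ℕ} (f g : ℕ → (Fin n ⊕ Fin n) → ℂ) (r : ℕ → ℂ) (m : ℕ)
    (h : ∀ j < m, g j - r j • f j ∈ cspan f j) (hg : ∀ j < m, g j ∉ cspan g j) :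
    ∀ j < m, r j ≠ 0 := by
  intro j
  induction j using Nat.strong_induction_on with
  | _ j ih =>
    intro hj h0
    apply hg j hj
    apply cspan_tri_ge f g r j (fun i hi => h i (by omega)) (fun i hi => ih i hi (by omega))
    simpa [h0] using h j hj

/-- The action of H on the filtration. -/
lemma H_cspan {n : ℕ} (A B : Matrix (Fin n) (Fin n) ℂ) (g : ℕ → (Fin n ⊕ Fin n) → ℂ)
    (hg : ∀ i, (BSmat A B).mulVec (g i) = g (i + 1)) (m : ℕ) {x : (Fin n ⊕ Fin n) → ℂ}
    (hx : x ∈ cspan g m) : (BSmat A B).mulVec x ∈ cspan g (m + 1) := by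
  induction hx using Submodule.span_induction with
  | mem x hx =>
    obtain ⟨i, hi, rfl | rfl⟩ := hx
    · rw [hg]; exact mem_cspan g (by omega)
    · rw [BS_Jmap, hg]; exact Submodule.neg_mem _ (mem_cspan_J g (by omega))
  | zero => simp
  | add x y _ _ hx hy => rw [Matrix.mulVec_add]; exact Submodule.add_mem _ hx hy
  | smul c x _ hx => rw [Matrix.mulVec_smul]; exact Submodule.smul_mem _ _ hx

lemma H_tri {n : ℕ} (A B : Matrix (Fin n) (Fin n) ℂ) (f g : ℕ → (Fin n ⊕ Fin n) → ℂ)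
    (hg : ∀ i, (BSmat A B).mulVec (g i) = g (i + 1)) (r : ℕ → ℂ) (m : ℕ)
    (h : ∀ j < m, g j - r j • f j ∈ cspan f j) (hr : ∀ j < m, r j ≠ 0) (j : ℕ) (hj : j + 1 < m) :
    (BSmat A B).mulVec (f j) - (r (j + 1) / r j) • f (j + 1) ∈ cspan f (j + 1) := by
  have h1 : (BSmat A B).mulVec (g j - r j • f j) ∈ cspan f (j + 1) :=
    cspan_tri_le f g r (j + 1) (fun i hi => h i (by omega))
      (H_cspan A B g hg j (cspan_tri_ge f g r j (fun i hi => h i (by omega))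
        (fun i hi => hr i (by omega)) (h j (by omega))))
  rw [Matrix.mulVec_sub, Matrix.mulVec_smul, hg] at h1
  have h2 := Submodule.smul_mem _ (r j)⁻¹ (Submodule.sub_mem _ (h (j + 1) hj) h1)
  convert h2 using 1
  have h3 := hr j (by omega)
  funext i
  simp
  field_simp

/-- columns of the Krylov matrix are not in the previous span -/
lemma krylov_notMem {n m : ℕ} (A B : Matrix (Fin n) (Fin n) ℂ) (q : (Fin n ⊕ Fin n) → ℂ)
    (hrank : (KrylovMat (BSmat A B) q m).rank = 2 * m) (j : ℕ) (hj : j < m) :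
    (BSmat A B ^ j).mulVec q ∉ cspan (fun i => (BSmat A B ^ i).mulVec q) j := by
  have hli : LinearIndependent ℂ (KrylovMat (BSmat A B) q m).col := by
    rw [linearIndependent_iff_card_eq_finrank_span, Set.finrank, ← Matrix.rank_eq_finrank_span_cols,
      hrank]
    simp; ring
  have hsub := hli.notMem_span_image (s := {a | (Sum.elim (fun i : Fin m => (i : ℕ)) (fun i : Fin m => (i : ℕ)) a : ℕ) < j})
    (x := Sum.inl ⟨j, hj⟩) (by simp)
  intro hmem
  apply hsub
  refine Submodule.span_mono ?_ hmem
  rintro x ⟨i, hi, rfl | rfl⟩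
  · exact ⟨Sum.inl ⟨i, by omega⟩, hi, rfl⟩
  · refine ⟨Sum.inr ⟨i, by omega⟩, hi, ?_⟩
    have h1 : (mconj (BSmat A B) ^ i).mulVec (star q) = star ((BSmat A B ^ i).mulVec q) := by
      have : mconj (BSmat A B) ^ i = mconj (BSmat A B ^ i) :=
        (map_pow (RingHom.mapMatrix (starRingEnd ℂ)) (BSmat A B) i).symm
      rw [this]
      funext a
      simp [Matrix.mulVec, dotProduct, mconj]
    have : (KrylovMat (BSmat A B) q m).col (Sum.inr ⟨i, by omega⟩) =
      (PiMat n).mulVec ((mconj (BSmat A B) ^ i).mulVec (star q)) := rfl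
    rw [this, h1, Jmap_eq]


/-- X is compatible with swapping and conjugation (a Π⁺-matrix). -/
def SwapConj {n m : ℕ} (X : Matrix (Fin n ⊕ Fin n) (Fin m ⊕ Fin m) ℂ) : Prop :=
  ∀ i j, X i.swap j.swap = star (X i j)

lemma SwapConj.mul {n m l : ℕ} {X : Matrix (Fin n ⊕ Fin n) (Fin m ⊕ Fin m) ℂ}
    {Y : Matrix (Fin m ⊕ Fin m) (Fin l ⊕ Fin l) ℂ} (hX : SwapConj X) (hY : SwapConj Y) :
    SwapConj (X * Y) := by
  intro i j
  simp only [Matrix.mul_apply, star_sum, star_mul']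
  rw [← Equiv.sum_comp (Equiv.sumComm (Fin m) (Fin m))]
  refine Finset.sum_congr rfl fun a _ => ?_
  rw [← hX, ← hY]; rfl

lemma SwapConj.conjTranspose {n m : ℕ} {X : Matrix (Fin n ⊕ Fin n) (Fin m ⊕ Fin m) ℂ}
    (hX : SwapConj X) : SwapConj Xᴴ := by
  intro i j
  simp [Matrix.conjTranspose_apply, hX j i]

lemma SwapConj.Jmap_mulVec {n m : ℕ} {X : Matrix (Fin n ⊕ Fin n) (Fin m ⊕ Fin m) ℂ}
    (hX : SwapConj X) (c : (Fin m ⊕ Fin m) → ℂ) : Jmap (X.mulVec c) = X.mulVec (Jmap c) := by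
  funext i
  simp only [Jmap, Matrix.mulVec, dotProduct, star_sum, star_mul']
  rw [← Equiv.sum_comp (Equiv.sumComm (Fin m) (Fin m))]
  refine Finset.sum_congr rfl fun a _ => ?_
  rw [← hX]; simp

lemma swapConj_of_isPiMat {n m : ℕ} {X : Matrix (Fin n ⊕ Fin n) (Fin m ⊕ Fin m) ℂ}
    (hX : IsPiMat 1 X) : SwapConj X := by
  have key : ∀ i j, X i j.swap = star (X i.swap j) := by
    intro i j
    have h := congrFun (congrFun hX i) j
    rw [one_smul] at h
    rcases i with i | i <;> rcases j with j | j <;>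
      simpa [PiMat, mconj, Matrix.mul_apply, Fintype.sum_sum_type, Matrix.one_apply] using h
  intro i j
  rw [key]; simp

lemma gammaH_swapConj {n : ℕ} (A B : Matrix (Fin n) (Fin n) ℂ) :
    SwapConj (GammaZero n * BSmat A B) := by
  rintro (i | i) (j | j) <;> simp [GammaZero, BSmat, Matrix.fromBlocks_multiply, mconj]

lemma gammaH_herm {n : ℕ} (A B : Matrix (Fin n) (Fin n) ℂ) (hA : Aᴴ = A) (hB : Bᵀ = B) :
    (GammaZero n * BSmat A B)ᴴ = GammaZero n * BSmat A B := by
  have hA' : ∀ i j, star (A j i) = A i j := fun i j => congrFun (congrFun hA i) j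
  have hB' : ∀ i j, B j i = B i j := fun i j => congrFun (congrFun hB i) j
  ext i j
  rcases i with i | i <;> rcases j with j | j <;>
    simp [GammaZero, BSmat, Matrix.fromBlocks_multiply, mconj, Matrix.conjTranspose_apply]
  · exact hA' i j
  · exact hB' i j
  · rw [hB']
  · rw [← hA' i j]; simp

/-- The columns of the left half of Q, indexed by ℕ. -/
def ucol {n m : ℕ} (Q : Matrix (Fin n ⊕ Fin n) (Fin m ⊕ Fin m) ℂ) (i : ℕ) : (Fin n ⊕ Fin n) → ℂ :=
  if h : i < m then Q.col (Sum.inl ⟨i, h⟩) else 0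

lemma ucol_fin {n m : ℕ} (Q : Matrix (Fin n ⊕ Fin n) (Fin m ⊕ Fin m) ℂ) (i : Fin m) :
    ucol Q i = Q.mulVec (Pi.single (Sum.inl i) 1) := by
  simp [ucol]

lemma Jmap_ucol {n m : ℕ} {Q : Matrix (Fin n ⊕ Fin n) (Fin m ⊕ Fin m) ℂ} (hQ : SwapConj Q)
    (i : Fin m) : Jmap (ucol Q i) = Q.col (Sum.inr i) := by
  funext a
  have := hQ a.swap (Sum.inl i)
  simp at this
  simp [ucol, Jmap, this]

lemma cspan_repr {n m : ℕ} {Q : Matrix (Fin n ⊕ Fin n) (Fin m ⊕ Fin m) ℂ} (hQ : SwapConj Q)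
    (l : ℕ) {w : (Fin n ⊕ Fin n) → ℂ} (hw : w ∈ cspan (ucol Q) l) :
    ∃ c : (Fin m ⊕ Fin m) → ℂ, w = Q.mulVec c ∧
      ∀ i : Fin m, l ≤ (i : ℕ) → c (Sum.inl i) = 0 ∧ c (Sum.inr i) = 0 := by
  induction hw using Submodule.span_induction with
  | mem x hx =>
    obtain ⟨i, hi, hx⟩ := hx
    by_cases him : i < m
    · rcases hx with rfl | rfl
      · refine ⟨Pi.single (Sum.inl ⟨i, him⟩) 1, ucol_fin Q ⟨i, him⟩, fun a ha => ⟨?_, by simp⟩⟩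
        rw [Pi.single_eq_of_ne]
        rintro h
        have := Sum.inl.inj h
        subst this
        simp at ha; omega
      · refine ⟨Pi.single (Sum.inr ⟨i, him⟩) 1, ?_, fun a ha => ⟨by simp, ?_⟩⟩
        · have := Jmap_ucol hQ ⟨i, him⟩
          simpa using this
        rw [Pi.single_eq_of_ne]
        rintro h
        have := Sum.inr.inj h
        subst this
        simp at ha; omega
    · refine ⟨0, ?_, fun a ha => by simp⟩
      rcases hx with rfl | rfl <;> simp [ucol, him, Jmap_zero]
  | zero => exact ⟨0, by simp, by simp⟩
  | add x y _ _ hx hy =>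
    obtain ⟨c, rfl, hc⟩ := hx
    obtain ⟨d, rfl, hd⟩ := hy
    refine ⟨c + d, by rw [Matrix.mulVec_add], fun i hi => ?_⟩
    simp [hc i hi, hd i hi]
  | smul a x _ hx =>
    obtain ⟨c, rfl, hc⟩ := hx
    refine ⟨a • c, by rw [Matrix.mulVec_smul], fun i hi => ?_⟩
    simp [hc i hi]

lemma qr_tri {n m : ℕ} (A B : Matrix (Fin n) (Fin n) ℂ) (q : (Fin n ⊕ Fin n) → ℂ)
    {Q : Matrix (Fin n ⊕ Fin n) (Fin m ⊕ Fin m) ℂ} (hQ : SwapConj Q)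
    {R : Matrix (Fin m ⊕ Fin m) (Fin m ⊕ Fin m) ℂ} (hR : IsPiUpperTri 1 R)
    (h : KrylovMat (BSmat A B) q m = Q * R) :
    ∃ r : ℕ → ℂ, ∀ j < m, (BSmat A B ^ j).mulVec q - r j • ucol Q j ∈ cspan (ucol Q) j := by
  obtain ⟨R1, R2, rfl, h1, h2⟩ := hR
  refine ⟨fun j => if hj : j < m then R1 ⟨j, hj⟩ ⟨j, hj⟩ else 0, fun j hj => ?_⟩
  have key : (BSmat A B ^ j).mulVec q = ∑ i : Fin m, R1 i ⟨j, hj⟩ • ucol Q i +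
      ∑ i : Fin m, star (R2 i ⟨j, hj⟩) • Jmap (ucol Q i) := by
    funext a
    have := congrFun (congrFun h a) (Sum.inl ⟨j, hj⟩)
    have h3 : KrylovMat (BSmat A B) q m a (Sum.inl ⟨j, hj⟩) = (BSmat A B ^ j).mulVec q a := rfl
    rw [← h3, this, Matrix.mul_apply, Fintype.sum_sum_type]
    simp only [Jmap_ucol hQ]
    simp [ucol, mconj, mul_comm]
  rw [key, ← Finset.add_sum_erase _ _ (Finset.mem_univ (⟨j, hj⟩ : Fin m))]
  simp only [hj, dif_pos]
  rw [add_assoc, add_sub_cancel_left]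
  refine Submodule.add_mem _ (Submodule.sum_mem _ fun i hi => ?_) (Submodule.sum_mem _ fun i _ => ?_)
  · have hne : (i : ℕ) ≠ j := fun hh => (Finset.ne_of_mem_erase hi) (Fin.ext hh)
    by_cases hij : (i : ℕ) < j
    · exact Submodule.smul_mem _ _ (mem_cspan _ hij)
    · rw [h1 i ⟨j, hj⟩ (by simp; omega)]; simp
  · by_cases hij : (i : ℕ) < j
    · exact Submodule.smul_mem _ _ (mem_cspan_J _ hij)
    · rw [h2 i ⟨j, hj⟩ (by simp; omega)]; simp

lemma exists_C {n k : ℕ} (A B : Matrix (Fin n) (Fin n) ℂ) (q : (Fin n ⊕ Fin n) → ℂ)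
    (hrank : (KrylovMat (BSmat A B) q (k + 1)).rank = 2 * (k + 1))
    {Q : Matrix (Fin n ⊕ Fin n) (Fin (k + 1) ⊕ Fin (k + 1)) ℂ} (hQ : SwapConj Q)
    {R : Matrix (Fin (k + 1) ⊕ Fin (k + 1)) (Fin (k + 1) ⊕ Fin (k + 1)) ℂ}
    (hR : IsPiUpperTri 1 R)
    (h : KrylovMat (BSmat A B) q (k + 1) = Q * R) (j : Fin k) :
    ∃ c : (Fin (k + 1) ⊕ Fin (k + 1)) → ℂ,
      (BSmat A B).mulVec (Q.col (Sum.inl j.castSucc)) = Q.mulVec c ∧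
      (∀ i : Fin (k + 1), (j : ℕ) + 1 < i → c (Sum.inl i) = 0) ∧
      (∀ i : Fin (k + 1), (j : ℕ) < i → c (Sum.inr i) = 0) ∧
      c (Sum.inl j.succ) ≠ 0 := by
  obtain ⟨r, hr⟩ := qr_tri A B q hQ hR h
  have hr0 := tri_ne_zero _ _ r (k + 1) hr (krylov_notMem A B q hrank)
  have hH := H_tri A B (ucol Q) (fun i => (BSmat A B ^ i).mulVec q)
    (fun i => by simp [Matrix.mulVec_mulVec, pow_succ']) r (k + 1) hr hr0 j (by omega)
  obtain ⟨c, hc, hc0⟩ := cspan_repr hQ _ hH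
  have e1 : ucol Q (j : ℕ) = Q.col (Sum.inl j.castSucc) := by
    have : (j : ℕ) < k + 1 := by omega
    simp [ucol, this]; rfl
  have e2 := ucol_fin Q j.succ
  rw [Fin.val_succ] at e2
  rw [e1, e2, sub_eq_iff_eq_add, ← Matrix.mulVec_smul, ← Matrix.mulVec_add] at hc
  refine ⟨_, hc, fun i hi => ?_, fun i hi => ?_, ?_⟩
  · have : i ≠ j.succ := by rintro rfl; simp at hi
    simp [(hc0 i (by omega)).1, this]
  · simp [(hc0 i (by omega)).2]
  · have := (hc0 j.succ (by simp)).1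
    simp [this]
    exact ⟨hr0 _ (by omega), hr0 _ (by omega)⟩

/-- existence of the ΓLan decomposition H·Q_{2k} = Q_{2k+2}·T̃_{2k} from
the skinny ΓQR factorization of the Π-Krylov matrix. -/
theorem stmt13 (n k : ℕ) (hk : 1 ≤ k) (hn : k + 1 ≤ n)
    (A B : Matrix (Fin n) (Fin n) ℂ) (hA : Aᴴ = A) (hB : Bᵀ = B)
    (q₁ : (Fin n ⊕ Fin n) → ℂ)
    (hrank : (KrylovMat (BSmat A B) q₁ (k + 1)).rank = 2 * (k + 1))
    (hminor : ∀ (i : ℕ) (h : i ≤ k + 1), 1 ≤ i →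
      piLeadingMinor ((KrylovMat (BSmat A B) q₁ (k + 1))ᴴ * GammaZero n *
        KrylovMat (BSmat A B) q₁ (k + 1)) i h ≠ 0)
    (Q : Matrix (Fin n ⊕ Fin n) (Fin (k + 1) ⊕ Fin (k + 1)) ℂ)
    (R : Matrix (Fin (k + 1) ⊕ Fin (k + 1)) (Fin (k + 1) ⊕ Fin (k + 1)) ℂ)
    (hQR : IsSkinnyGammaQR (GammaZero n) (KrylovMat (BSmat A B) q₁ (k + 1)) Q R)
    (δ : Fin (k + 1) → ℂ) (hδ : ∀ j, δ j = 1 ∨ δ j = -1)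
    (hGam : Qᴴ * GammaZero n * Q =
      Matrix.fromBlocks (Matrix.diagonal δ) 0 0 (-(Matrix.diagonal δ))) :
    ∃ (T11 T21 : Matrix (Fin k) (Fin k) ℂ) (t : ℂ),
      IsTridiagonal T11 ∧
      (∀ (i : Fin k) (h : (i : ℕ) + 1 < k),
        T11 ⟨(i : ℕ) + 1, h⟩ i ≠ 0 ∧ T11 i ⟨(i : ℕ) + 1, h⟩ ≠ 0) ∧
      T21.IsDiag ∧
      (BSmat A B * Q.submatrix id (Sum.map Fin.castSucc Fin.castSucc) =
        Q * gammaLanForm k T11 T21 t) ∧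
      ((Q.submatrix id (Sum.map Fin.castSucc Fin.castSucc))ᴴ * GammaZero n *
          BSmat A B * Q.submatrix id (Sum.map Fin.castSucc Fin.castSucc) =
        Matrix.fromBlocks (Matrix.diagonal (δ ∘ Fin.castSucc)) 0 0
            (-(Matrix.diagonal (δ ∘ Fin.castSucc))) *
          Matrix.fromBlocks T11 (-(mconj T21)) T21 (-(mconj T11))) ∧
      ((Matrix.diagonal (δ ∘ Fin.castSucc) * T11)ᴴ =
        Matrix.diagonal (δ ∘ Fin.castSucc) * T11) := by
  obtain ⟨hK, hPi, -, hR⟩ := hQR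
  have hQ := swapConj_of_isPiMat hPi
  choose C hC hC1 hC2 hC3 using fun j : Fin k => exists_C A B q₁ hrank hQ hR hK j
  set M := Qᴴ * (GammaZero n * BSmat A B) * Q with hM
  have hδs : ∀ i, star (δ i) = δ i := fun i => by rcases hδ i with h | h <;> simp [h]
  have hδ2 : ∀ i, δ i * δ i = 1 := fun i => by rcases hδ i with h | h <;> simp [h]
  have hδ0 : ∀ i, δ i ≠ 0 := fun i => by rcases hδ i with h | h <;> simp [h]
  have hMs : ∀ a b, M a.swap b.swap = star (M a b) :=
    (hQ.conjTranspose.mul (gammaH_swapConj A B)).mul hQ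
  have hMh : ∀ a b, star (M a b) = M b a := by
    have : Mᴴ = M := by
      rw [hM, Matrix.conjTranspose_mul, Matrix.conjTranspose_mul Qᴴ,
        gammaH_herm A B hA hB, Matrix.conjTranspose_conjTranspose, Matrix.mul_assoc Qᴴ]
    intro a b
    exact congrFun (congrFun this b) a
  have hMcol : ∀ j : Fin k, M.col (Sum.inl j.castSucc) =
      (Matrix.fromBlocks (Matrix.diagonal δ) 0 0 (-(Matrix.diagonal δ))).mulVec (C j) := by
    intro j
    rw [← hGam, ← Matrix.mulVec_mulVec, ← hC j, Matrix.mulVec_mulVec, ← Matrix.mulVec_single_one,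
      ← Matrix.mulVec_single_one, Matrix.mulVec_mulVec, hM]
    simp only [Matrix.mul_assoc]
  have hM1 : ∀ (i : Fin (k + 1)) (j : Fin k),
      M (Sum.inl i) (Sum.inl j.castSucc) = δ i * C j (Sum.inl i) := by
    intro i j
    have := congrFun (hMcol j) (Sum.inl i)
    simpa [Matrix.mulVec, dotProduct, Fintype.sum_sum_type, Matrix.diagonal_apply] using this
  have hM2 : ∀ (i : Fin (k + 1)) (j : Fin k),
      M (Sum.inr i) (Sum.inl j.castSucc) = -(δ i * C j (Sum.inr i)) := by
    intro i j
    have := congrFun (hMcol j) (Sum.inr i)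
    simpa [Matrix.mulVec, dotProduct, Fintype.sum_sum_type, Matrix.diagonal_apply] using this
  -- Hermitian and symmetric relations
  have hH1 : ∀ i j : Fin k, star (δ i.castSucc * C j (Sum.inl i.castSucc)) =
      δ j.castSucc * C i (Sum.inl j.castSucc) := by
    intro i j
    rw [← hM1, ← hM1, hMh]
  have hS : ∀ i j : Fin k, δ i.castSucc * C j (Sum.inr i.castSucc) =
      δ j.castSucc * C i (Sum.inr j.castSucc) := by
    intro i j
    have h1 := hM2 i.castSucc j
    have h2 := hM2 j.castSucc i
    have h3 := hMs (Sum.inl j.castSucc) (Sum.inr i.castSucc)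
    rw [hMh] at h3
    simp only [Sum.swap_inl, Sum.swap_inr] at h3
    rw [h1, h2] at h3
    exact (neg_injective h3).symm
  have hlow : ∀ i j : Fin k, (j : ℕ) + 1 < i → C j (Sum.inl i.castSucc) = 0 :=
    fun i j h => hC1 j i.castSucc (by simpa using h)
  have hsub : ∀ (i : Fin k) (h : (i : ℕ) + 1 < k),
      C i (Sum.inl (⟨(i : ℕ) + 1, h⟩ : Fin k).castSucc) ≠ 0 := fun i h => hC3 i
  have htrans : ∀ i j : Fin k, C j (Sum.inl i.castSucc) = 0 → C i (Sum.inl j.castSucc) = 0 := by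
    intro i j h
    have := hH1 i j
    rw [h, mul_zero, star_zero] at this
    exact (mul_eq_zero.1 this.symm).resolve_left (hδ0 _)
  have hdiag : ∀ i j : Fin k, i ≠ j → C j (Sum.inr i.castSucc) = 0 := by
    intro i j hij
    rcases lt_or_gt_of_ne hij with h | h
    · have := hS i j
      rw [hC2 i j.castSucc (by simpa using h), mul_zero] at this
      exact (mul_eq_zero.1 this).resolve_left (hδ0 _)
    · exact hC2 j i.castSucc (by simpa using h)
  refine ⟨Matrix.of fun i j => C j (Sum.inl i.castSucc), Matrix.of fun i j => C j (Sum.inr i.castSucc),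
    C ⟨k - 1, by omega⟩ (Sum.inl (Fin.last k)), ?_, ?_, ?_, ?_, ?_, ?_⟩
  · rintro i j (h | h)
    · exact htrans j i (hlow j i h)
    · exact hlow i j h
  · intro i h
    refine ⟨hsub i h, fun h0 => hsub i h ?_⟩
    exact htrans i ⟨(i : ℕ) + 1, h⟩ h0
  · intro i j hij
    exact hdiag i j hij
  · -- the Lanczos relation
    have hlast : ∀ (i : Fin (k + 1)) (j : Fin k), ¬ (i : ℕ) < k → C j (Sum.inl i) =
        if (j : ℕ) + 1 = k then C ⟨k - 1, by omega⟩ (Sum.inl (Fin.last k)) else 0 := by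
      intro i j hi
      have hi' : i = Fin.last k := Fin.ext (by simp; omega)
      subst hi'
      split_ifs with h
      · congr 2
        exact Fin.ext (by simp; omega)
      · exact hC1 j _ (by simp; omega)
    have hlast2 : ∀ (i : Fin (k + 1)) (j : Fin k), ¬ (i : ℕ) < k → C j (Sum.inr i) = 0 :=
      fun i j hi => hC2 j i (by omega)
    set T := gammaLanForm k (Matrix.of fun i j => C j (Sum.inl i.castSucc))
      (Matrix.of fun i j => C j (Sum.inr i.castSucc)) (C ⟨k - 1, by omega⟩ (Sum.inl (Fin.last k))) with hT
    have hT1 : ∀ j : Fin k, T.col (Sum.inl j) = C j := by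
      intro j
      funext a
      rcases a with a | a
      · by_cases ha : (a : ℕ) < k
        · simp [hT, gammaLanForm, ha]
        · simp [hT, gammaLanForm, ha, hlast a j ha]
      · by_cases ha : (a : ℕ) < k
        · simp [hT, gammaLanForm, ha]
        · simp [hT, gammaLanForm, ha, hlast2 a j ha]
    have hT2 : ∀ j : Fin k, T.col (Sum.inr j) = - Jmap (C j) := by
      intro j
      funext a
      rcases a with a | a
      · by_cases ha : (a : ℕ) < k
        · simp [hT, gammaLanForm, ha, Jmap]
        · simp [hT, gammaLanForm, ha, hlast2 a j ha, Jmap]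
      · by_cases ha : (a : ℕ) < k
        · simp [hT, gammaLanForm, ha, Jmap]
        · simp only [hT, gammaLanForm, Matrix.col_apply, Matrix.of_apply, ha, dif_neg,
            not_false_eq_true, Sum.elim_inr, Pi.neg_apply, Jmap, Sum.swap_inr, hlast a j ha]
          split_ifs <;> simp
    have hJ : ∀ j : Fin k, Q.col (Sum.inr j.castSucc) = Jmap (Q.col (Sum.inl j.castSucc)) := by
      intro j
      funext a
      have := hQ a.swap (Sum.inl j.castSucc)
      simpa [Jmap] using this
    ext a b
    rcases b with j | j
    · have h1 := congrFun (hC j) a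
      rw [← hT1 j] at h1
      exact h1
    · have h1 : (BSmat A B).mulVec (Q.col (Sum.inr j.castSucc)) = Q.mulVec (T.col (Sum.inr j)) := by
        rw [hT2, hJ, BS_Jmap, hC, hQ.Jmap_mulVec, Matrix.mulVec_neg]
      exact congrFun h1 a
  · have hMsub : (Q.submatrix id (Sum.map Fin.castSucc Fin.castSucc))ᴴ * GammaZero n *
          BSmat A B * Q.submatrix id (Sum.map Fin.castSucc Fin.castSucc) =
        M.submatrix (Sum.map Fin.castSucc Fin.castSucc) (Sum.map Fin.castSucc Fin.castSucc) := by
      rw [Matrix.mul_assoc (_)ᴴ]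
      rfl
    rw [hMsub, Matrix.fromBlocks_multiply]
    have hM3 : ∀ i j : Fin k, M (Sum.inl i.castSucc) (Sum.inr j.castSucc) =
        -(δ i.castSucc * star (C j (Sum.inr i.castSucc))) := by
      intro i j
      have h := hMs (Sum.inr i.castSucc) (Sum.inl j.castSucc)
      simp only [Sum.swap_inl, Sum.swap_inr] at h
      rw [h, hM2, star_neg, star_mul', hδs]
    have hM4 : ∀ i j : Fin k, M (Sum.inr i.castSucc) (Sum.inr j.castSucc) =
        δ i.castSucc * star (C j (Sum.inl i.castSucc)) := by
      intro i j
      have h := hMs (Sum.inl i.castSucc) (Sum.inl j.castSucc)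
      simp only [Sum.swap_inl, Sum.swap_inr] at h
      rw [h, hM1, star_mul', hδs]
    ext a b
    rcases a with i | i <;> rcases b with j | j
    · simp [hM1, Matrix.diagonal_mul]
    · simp [hM3, Matrix.diagonal_mul, mconj]
    · simp [hM2, Matrix.diagonal_mul]
    · simp [hM4, Matrix.diagonal_mul, mconj]
  · ext i j
    have := hH1 j i
    simpa [Matrix.conjTranspose_apply, Matrix.diagonal_mul] using this


end
end

section
/- Let H be the Bethe–Salpeter matrix with a ΓLan decomposition H·Q_{2k} = Q_{2k+2}·T̃_{2k}, where Q_{2k+2} = [q₁, …, q_{k+1}, Π·conj(q₁), …, Π·conj(q_{k+1})] ∈ ℂ^{2n×(2k+2)} satisfies Q_{2k+2}ᴴ·Γ₀·Q_{2k+2} ∈ 𝔾_{2k+2}, Q_{2k} consists of columns 1..k and k+2..2k+1 of Q_{2k+2}, and T̃_{2k} ∈ ℂ^{(2k+2)×2k} is in ΓLan form with blocks T₁₁, T₂₁, t. Set H₁₁ = [[T₁₁, −conj(T₂₁)],[T₂₁, −conj(T₁₁)]] ∈ ℂ^{2k×2k} and β_k = T̃_{2k}(k+1, k) = t. If H₁₁·x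 = ν·x with x ∈ ℂ^{2k} and ν ∈ ℂ, then H·Q_{2k}·x − ν·Q_{2k}·x = β_k·ξ_k·q_{k+1} − conj(β_k)·ξ_{2k}·Π·conj(q_{k+1}), where ξ_k and ξ_{2k} are the k-th and 2k-th entries of x. -/
open Matrix Complex

noncomputable section

/-- residual formula for Ritz pairs of H₁₁:
H·Q_{2k}·x − ν·Q_{2k}·x = β_k·ξ_k·q_{k+1} − conj(β_k)·ξ_{2k}·Π·conj(q_{k+1}). -/
theorem stmt18 (n k : ℕ) (hk : 1 ≤ k) (hn : k + 1 ≤ n)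
    (A B : Matrix (Fin n) (Fin n) ℂ) (hA : Aᴴ = A) (hB : Bᵀ = B)
    (q : Fin (k + 1) → (Fin n ⊕ Fin n) → ℂ)
    (hGam : IsGammaMat ((QfromCols q)ᴴ * GammaZero n * QfromCols q))
    (T11 T21 : Matrix (Fin k) (Fin k) ℂ) (t : ℂ)
    (hT11 : IsTridiagonal T11) (hT21 : T21.IsDiag)
    (hdec : BSmat A B * QfromCols (q ∘ Fin.castSucc) =
      QfromCols q * gammaLanForm k T11 T21 t)
    (x : (Fin k ⊕ Fin k) → ℂ) (ν : ℂ)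
    (hx : (Matrix.fromBlocks T11 (-(mconj T21)) T21 (-(mconj T11))).mulVec x = ν • x) :
    (BSmat A B).mulVec ((QfromCols (q ∘ Fin.castSucc)).mulVec x) -
        ν • (QfromCols (q ∘ Fin.castSucc)).mulVec x =
      (t * x (Sum.inl ⟨k - 1, Nat.sub_lt hk one_pos⟩)) • q (Fin.last k) -
        (starRingEnd ℂ t * x (Sum.inr ⟨k - 1, Nat.sub_lt hk one_pos⟩)) •
          (PiMat n).mulVec (star (q (Fin.last k))) := by
  obtain ⟨m, rfl⟩ : ∃ m, k = m + 1 := ⟨k - 1, by omega⟩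
  have e1 : ∀ i, (gammaLanForm (m+1) T11 T21 t).mulVec x (Sum.inl (Fin.castSucc i)) =
      ν * x (Sum.inl i) := by
    intro i
    have := congrFun hx (Sum.inl i)
    simp only [Pi.smul_apply, smul_eq_mul] at this
    rw [← this]
    simp [gammaLanForm, Matrix.mulVec, dotProduct, Fintype.sum_sum_type, mconj]
    intro h
    omega
  have e2 : ∀ i, (gammaLanForm (m+1) T11 T21 t).mulVec x (Sum.inr (Fin.castSucc i)) =
      ν * x (Sum.inr i) := by
    intro i
    have := congrFun hx (Sum.inr i)
    simp only [Pi.smul_apply, smul_eq_mul] at this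
    rw [← this]
    simp [gammaLanForm, Matrix.mulVec, dotProduct, Fintype.sum_sum_type, mconj]
    intro h
    omega
  have hj : ∀ j : Fin (m+1), ((j : ℕ) = m) ↔ j = Fin.last m := by
    intro j
    simp [Fin.ext_iff]
  have e3 : (gammaLanForm (m+1) T11 T21 t).mulVec x (Sum.inl (Fin.last (m+1))) =
      t * x (Sum.inl (Fin.last m)) := by
    simp [gammaLanForm, Matrix.mulVec, dotProduct, Fintype.sum_sum_type, hj]
  have e4 : (gammaLanForm (m+1) T11 T21 t).mulVec x (Sum.inr (Fin.last (m+1))) =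
      -(starRingEnd ℂ t * x (Sum.inr (Fin.last m))) := by
    simp [gammaLanForm, Matrix.mulVec, dotProduct, Fintype.sum_sum_type, hj]
  rw [Matrix.mulVec_mulVec, hdec, ← Matrix.mulVec_mulVec]
  generalize (gammaLanForm (m+1) T11 T21 t).mulVec x = y at e1 e2 e3 e4
  have hl : (⟨m + 1 - 1, Nat.sub_lt hk one_pos⟩ : Fin (m+1)) = Fin.last m := rfl
  rw [hl]
  have key : ∀ i, (QfromCols q).mulVec y i =
      ν * (QfromCols (q ∘ Fin.castSucc)).mulVec x i
      + q (Fin.last (m+1)) i * y (Sum.inl (Fin.last (m+1)))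
      + (PiMat n).mulVec (star (q (Fin.last (m+1)))) i * y (Sum.inr (Fin.last (m+1))) := by
    intro i
    have a1 : (QfromCols q).mulVec y i = ∑ l, q l i * y (Sum.inl l)
        + ∑ l, (PiMat n).mulVec (star (q l)) i * y (Sum.inr l) := by
      rw [Matrix.mulVec, dotProduct, Fintype.sum_sum_type]; rfl
    have a2 : (QfromCols (q ∘ Fin.castSucc)).mulVec x i
        = ∑ l, q (Fin.castSucc l) i * x (Sum.inl l)
        + ∑ l, (PiMat n).mulVec (star (q (Fin.castSucc l))) i * x (Sum.inr l) := by
      rw [Matrix.mulVec, dotProduct, Fintype.sum_sum_type]; rfl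
    rw [a1, a2, Fin.sum_univ_castSucc (n := m + 1),
      Fin.sum_univ_castSucc (n := m + 1) (fun l => (PiMat n).mulVec (star (q l)) i * y (Sum.inr l)),
      mul_add, Finset.mul_sum, Finset.mul_sum]
    simp only [e1, e2, mul_left_comm ν]
    ring
  funext i
  simp only [Pi.sub_apply, Pi.smul_apply, smul_eq_mul]
  rw [key, e3, e4]
  ring

end
end
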